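/- arXiv:2407.16865 — 4 statements merged into one kernel-verified Lean document; each statement's English description precedes it below -/
import Mathlib

section
/- Suppose f is such a piecewise-C¹ one-parameter family with β > 0, a_L > 1, and 0 < a_R < 1. Let s_L > 1 and 0 < s_R < 1 be arbitrary, and let ν(μ) = f(0;μ). Then there exist μ₀ > 0 and open neighbourhoods N, M(μ), and P(μ) of 0 such that for all μ ∈ (−μ₀, μ₀), the map f(·;μ) on N, the piecewise-linear map y ↦ ν(μ) + s_L y for y ≤ 0, y ↦ ν(μ) + s_R y for y ≥ 0 on M(μ), and the quadratic map y ↦ ν(μ) + y − y² on P(μ) are all topologically conjugate to one another. -/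
/-- The piecewise-smooth family: `f(x;μ) = f_L(x;μ)` for `x ≤ 0` and `f_R(x;μ)` for `x > 0`
(these agree when the continuity condition `f_L(0;μ) = f_R(0;μ)` holds). -/
noncomputable def pwFam (fL fR : ℝ → ℝ → ℝ) (μ : ℝ) : ℝ → ℝ :=
  fun x => if x ≤ 0 then fL x μ else fR x μ

/-- `h` is a homeomorphism from `U` onto `V`. -/
def IsHomeoOn (h : ℝ → ℝ) (U V : Set ℝ) : Prop :=
  Set.BijOn h U V ∧ ContinuousOn h U ∧
    ∃ hinv : ℝ → ℝ, Set.InvOn hinv h U V ∧ ContinuousOn hinv V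

/-- `h` intertwines `f` and `g` on `U`: `h (f x) = g (h x)` for all `x ∈ U` with `f x ∈ U`. -/
def ConjRelOn (h f g : ℝ → ℝ) (U : Set ℝ) : Prop :=
  ∀ x ∈ U, f x ∈ U → h (f x) = g (h x)

/-- `f` on `U` is topologically conjugate to `g` on `V`. -/
def TopConjOn (f g : ℝ → ℝ) (U V : Set ℝ) : Prop :=
  ∃ h : ℝ → ℝ, IsHomeoOn h U V ∧ ConjRelOn h f g U

/-!
The displacement `f x - x` of each of the three maps increases up to the fold point `0` and
decreases afterwards, so the sign of `ν = f 0` decides whether there are no, one or two fixed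
points nearby. Prolonged with slope `2` to the left and `1 / 2` to the right, each map becomes an
order automorphism of `ℝ` with no further fixed points. Between consecutive fixed points
all points move in the same direction, so an increasing bijection of one fundamental domain
`(F x₀, x₀]` onto `(G y₀, y₀]` extends uniquely to a conjugacy there, and the pieces glue along the
fixed points. The base points `x₀, y₀` are free: for `ν ≥ 0` they are chosen so that `±δ ↦ ±c`, and
for `ν < 0` so that `δ ↦ -ν`. In both cases the image of `(-δ, δ)` contains `0` and lies in the
region where the prolonged maps agree with the original ones.
-/

section OrderConjugacy

open Set Function

section Orbits

variable {α : Type*}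

/-- `F` maps the order-connected set `S` onto itself and moves each of its points down. -/
structure IsDescentOn [Preorder α] (F : α ≃o α) (S : Set α) : Prop where
  ordConnected : S.OrdConnected
  map_mem_iff : ∀ x, F x ∈ S ↔ x ∈ S
  map_lt : ∀ x ∈ S, F x < x

lemma zpow_add_one_apply [Preorder α] (F : α ≃o α) (n : ℤ) (x : α) :
    (F ^ (n + 1)) x = F ((F ^ n) x) := by
  rw [add_comm, zpow_one_add, RelIso.mul_apply]

namespace IsDescentOn

section Preorder

variable [Preorder α] {F : α ≃o α} {S : Set α}

lemma zpow_mem (hF : IsDescentOn F S) {x : α} (hx : x ∈ S) (n : ℤ) : (F ^ n) x ∈ S := by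
  induction n using Int.induction_on with
  | zero => simpa using hx
  | succ n ih => rwa [zpow_add_one_apply, hF.map_mem_iff]
  | pred n ih => rwa [← hF.map_mem_iff, ← zpow_add_one_apply, sub_add_cancel]

lemma strictAnti_zpow (hF : IsDescentOn F S) {x : α} (hx : x ∈ S) :
    StrictAnti fun n : ℤ => (F ^ n) x :=
  strictAnti_int_of_succ_lt fun n => by
    rw [zpow_add_one_apply]
    exact hF.map_lt _ (hF.zpow_mem hx n)

end Preorder

section ConditionallyCompleteLinearOrder

variable [ConditionallyCompleteLinearOrder α] {F : α ≃o α} {S : Set α}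

-- Otherwise the infimum of the orbit would be a fixed point of `F` in `S`.
lemma exists_zpow_lt (hF : IsDescentOn F S) {x y : α} (hx : x ∈ S) (hy : y ∈ S) :
    ∃ n : ℤ, (F ^ n) x < y := by
  by_contra! hle
  have hbdd : BddBelow (range fun n : ℤ => (F ^ n) x) := ⟨y, by rintro _ ⟨n, rfl⟩; exact hle n⟩
  have hmem : (⨅ n : ℤ, (F ^ n) x) ∈ S :=
    hF.ordConnected.out hy hx ⟨le_ciInf hle, by simpa using ciInf_le hbdd 0⟩
  have hfix : F (⨅ n : ℤ, (F ^ n) x) = ⨅ n : ℤ, (F ^ n) x := by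
    rw [F.map_ciInf hbdd, ← (Equiv.addRight (1 : ℤ)).iInf_comp (g := fun n : ℤ => (F ^ n) x)]
    simp only [Equiv.coe_addRight, zpow_add_one_apply]
  exact (hF.map_lt _ hmem).ne hfix

lemma existsUnique_zpow_mem_Ioc (hF : IsDescentOn F S) {x₀ x : α} (hx₀ : x₀ ∈ S) (hx : x ∈ S) :
    ∃! n : ℤ, x ∈ Ioc ((F ^ (n + 1)) x₀) ((F ^ n) x₀) := by
  have hanti := hF.strictAnti_zpow hx₀
  obtain ⟨m, hm⟩ := hF.exists_zpow_lt hx₀ hx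
  obtain ⟨k, hk⟩ := hF.exists_zpow_lt hx hx₀
  have hk' : x ≤ (F ^ (-k)) x₀ := by
    have := (F ^ (-k)).strictMono hk
    rw [← RelIso.mul_apply, ← zpow_add, neg_add_cancel, zpow_zero] at this
    exact this.le
  obtain ⟨n, hn, hmax⟩ := Int.exists_greatest_of_bdd (P := fun n : ℤ => x ≤ (F ^ n) x₀)
    ⟨m, fun n hn => (hanti.lt_iff_gt.1 (hm.trans_le hn)).le⟩ ⟨-k, hk'⟩
  refine ⟨n, ⟨?_, hn⟩, fun i hi => ?_⟩
  · by_contra! hlt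
    exact absurd (hmax _ hlt) (by lia)
  · have hni : n < i + 1 := hanti.lt_iff_gt.1 (hi.1.trans_le hn)
    exact le_antisymm (hmax _ hi.2) (by lia)

end ConditionallyCompleteLinearOrder

end IsDescentOn

end Orbits

section IsOrderConjOn

variable {α β : Type*} [Preorder α] [Preorder β]

/-- `h` is an increasing bijection from the `F`-invariant set `S` onto `T` that conjugates `F` on
`S` to `G` on `T`. -/
structure IsOrderConjOn (h : α → β) (F : α → α) (G : β → β) (S : Set α) (T : Set β) : Prop where
  strictMonoOn : StrictMonoOn h S
  image_eq : h '' S = T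
  mapsTo : MapsTo F S S
  semiconj : ∀ x ∈ S, h (F x) = G (h x)

namespace IsOrderConjOn

variable {h h' : α → β} {S S' : Set α} {T T' : Set β}

lemma singleton {F : α → α} {G : β → β} {a : α} {b : β} (ha : F a = a) (hb : G b = b) :
    IsOrderConjOn (fun _ => b) F G {a} {b} :=
  ⟨by simp, by simp, by simp [ha], by simp [hb]⟩

lemma congr {F : α → α} {G : β → β} (c : IsOrderConjOn h F G S T) (heq : EqOn h h' S) :
    IsOrderConjOn h' F G S T where
  strictMonoOn := c.strictMonoOn.congr heq
  image_eq := heq.image_eq ▸ c.image_eq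
  mapsTo := c.mapsTo
  semiconj x hx := by rw [← heq hx, ← heq (c.mapsTo hx), c.semiconj x hx]

lemma of_symm {F : α ≃o α} {G : β ≃o β} (c : IsOrderConjOn h F.symm G.symm S T)
    (hF : MapsTo F S S) : IsOrderConjOn h F G S T where
  strictMonoOn := c.strictMonoOn
  image_eq := c.image_eq
  mapsTo := hF
  semiconj x hx := by
    have := c.semiconj (F x) (hF hx)
    rwa [F.symm_apply_apply, eq_comm, G.symm_apply_eq] at this

lemma union [∀ x, Decidable (x ∈ S)] {F : α → α} {G : β → β} (c : IsOrderConjOn h F G S T)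
    (c' : IsOrderConjOn h' F G S' T') (hS : ∀ x ∈ S, ∀ y ∈ S', x < y)
    (hT : ∀ x ∈ T, ∀ y ∈ T', x < y) :
    IsOrderConjOn (S.piecewise h h') F G (S ∪ S') (T ∪ T') := by
  have heq : EqOn h (S.piecewise h h') S := (piecewise_eqOn S h h').symm
  have heq' : EqOn h' (S.piecewise h h') S' := fun x hx =>
    (piecewise_eq_of_notMem S h h' fun hxS => (hS x hxS x hx).false).symm
  replace c := c.congr heq
  replace c' := c'.congr heq'
  refine ⟨?_, by rw [image_union, c.image_eq, c'.image_eq], c.mapsTo.union_union c'.mapsTo, ?_⟩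
  · rintro x (hx | hx) y (hy | hy) hxy
    · exact c.strictMonoOn hx hy hxy
    · exact hT _ (c.image_eq ▸ mem_image_of_mem _ hx) _ (c'.image_eq ▸ mem_image_of_mem _ hy)
    · exact absurd hxy (hS _ hy _ hx).not_gt
    · exact c'.strictMonoOn hx hy hxy
  · rintro x (hx | hx)
    exacts [c.semiconj x hx, c'.semiconj x hx]

lemma exists_orderIso {α : Type*} [LinearOrder α] {h : α → β} {F : α → α} {G : β → β}
    (c : IsOrderConjOn h F G univ univ) :
    ∃ H : α ≃o β, ⇑H = h ∧ Semiconj H F G :=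
  ⟨(strictMonoOn_univ.1 c.strictMonoOn).orderIsoOfSurjective h
    (range_eq_univ.1 (image_univ ▸ c.image_eq)), rfl, fun x => c.semiconj x (mem_univ x)⟩

end IsOrderConjOn

end IsOrderConjOn

section ZpowTransport

variable {α β : Type*} [Preorder α] [Preorder β] {F : α ≃o α} {G : β ≃o β}

/-- The translate `Gⁿ ∘ φ ∘ F⁻ⁿ`: when `φ` maps the fundamental domain `(F x₀, x₀]` onto
`(G (φ x₀), φ x₀]`, this maps `(Fⁿ⁺¹ x₀, Fⁿ x₀]` onto `(Gⁿ⁺¹ (φ x₀), Gⁿ (φ x₀)]`. -/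
def zpowTransport (F : α ≃o α) (G : β ≃o β) (φ : α ≃o β) (n : ℤ) : α ≃o β :=
  ((F ^ n).symm.trans φ).trans (G ^ n)

lemma zpowTransport_zpow_apply (φ : α ≃o β) (n : ℤ) (x : α) :
    zpowTransport F G φ n ((F ^ n) x) = (G ^ n) (φ x) := by
  simp [zpowTransport]

lemma zpowTransport_add_one_apply (φ : α ≃o β) (n : ℤ) (x : α) :
    zpowTransport F G φ (n + 1) (F x) = G (zpowTransport F G φ n x) := by
  obtain ⟨y, rfl⟩ := (F ^ n).surjective x
  rw [← zpow_add_one_apply, zpowTransport_zpow_apply, zpowTransport_zpow_apply,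
    zpow_add_one_apply]

lemma zpowTransport_mem_Ioc_iff {φ : α ≃o β} {x₀ : α} (hφ : φ (F x₀) = G (φ x₀)) (n : ℤ) (x : α) :
    zpowTransport F G φ n x ∈ Ioc ((G ^ (n + 1)) (φ x₀)) ((G ^ n) (φ x₀)) ↔
      x ∈ Ioc ((F ^ (n + 1)) x₀) ((F ^ n) x₀) := by
  have hleft : (G ^ (n + 1)) (φ x₀) = zpowTransport F G φ n ((F ^ (n + 1)) x₀) := by
    rw [zpow_add_one, zpow_add_one, RelIso.mul_apply, RelIso.mul_apply,
      zpowTransport_zpow_apply, hφ]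
  rw [hleft, ← zpowTransport_zpow_apply, mem_Ioc, mem_Ioc, OrderIso.lt_iff_lt, OrderIso.le_iff_le]

end ZpowTransport

theorem IsDescentOn.exists_isOrderConjOn {α β : Type*} [ConditionallyCompleteLinearOrder α]
    [ConditionallyCompleteLinearOrder β] {F : α ≃o α} {G : β ≃o β} {S : Set α} {T : Set β}
    (hF : IsDescentOn F S) (hG : IsDescentOn G T)
    {φ : α ≃o β} {x₀ : α} (hx₀ : x₀ ∈ S) (hy₀ : φ x₀ ∈ T) (hφ : φ (F x₀) = G (φ x₀)) :
    ∃ h, IsOrderConjOn h F G S T ∧ h x₀ = φ x₀ := by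
  choose! idx hidx huniq using fun x (hx : x ∈ S) => hF.existsUnique_zpow_mem_Ioc hx₀ hx
  have himage : ∀ x ∈ S, zpowTransport F G φ (idx x) x ∈
      Ioc ((G ^ (idx x + 1)) (φ x₀)) ((G ^ idx x) (φ x₀)) := fun x hx =>
    (zpowTransport_mem_Ioc_iff hφ _ _).2 (hidx x hx)
  refine ⟨fun x => zpowTransport F G φ (idx x) x, ⟨?_, ?_, ?_, ?_⟩, ?_⟩
  · intro x hx y hy hxy
    have hle : idx y < idx x + 1 :=
      (hF.strictAnti_zpow hx₀).lt_iff_gt.1 ((hidx x hx).1.trans (hxy.trans_le (hidx y hy).2))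
    rcases (Int.lt_add_one_iff.1 hle).eq_or_lt with heq | hlt
    · simpa only [heq] using (zpowTransport F G φ (idx x)).strictMono hxy
    · calc zpowTransport F G φ (idx x) x ≤ (G ^ idx x) (φ x₀) := (himage x hx).2
        _ ≤ (G ^ (idx y + 1)) (φ x₀) := (hG.strictAnti_zpow hy₀).antitone hlt
        _ < zpowTransport F G φ (idx y) y := (himage y hy).1
  · refine Subset.antisymm ?_ fun y hy => ?_
    · rintro _ ⟨x, hx, rfl⟩
      exact hG.ordConnected.out (hG.zpow_mem hy₀ _) (hG.zpow_mem hy₀ _)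
        (Ioc_subset_Icc_self (himage x hx))
    · obtain ⟨n, hn, -⟩ := hG.existsUnique_zpow_mem_Ioc hy₀ hy
      obtain ⟨x, rfl⟩ := (zpowTransport F G φ n).surjective y
      rw [zpowTransport_mem_Ioc_iff hφ] at hn
      have hx : x ∈ S := hF.ordConnected.out (hF.zpow_mem hx₀ _) (hF.zpow_mem hx₀ _)
        (Ioc_subset_Icc_self hn)
      exact ⟨x, hx, by simp only [huniq x hx n hn]⟩
  · exact fun x hx => (hF.map_mem_iff x).2 hx
  · intro x hx
    have hshift : idx x + 1 = idx (F x) := by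
      refine huniq _ ((hF.map_mem_iff x).2 hx) _ ?_
      simpa only [zpow_add_one_apply F, mem_Ioc, F.lt_iff_lt, F.le_iff_le] using hidx x hx
    simp only [← hshift, zpowTransport_add_one_apply]
  · have hzero : 0 = idx x₀ := huniq x₀ hx₀ 0 (by simpa using hF.map_lt x₀ hx₀)
    simpa only [← hzero, zpow_zero] using! zpowTransport_zpow_apply φ 0 x₀

lemma exists_orderIso_apply_eq_apply_eq {K : Type*} [Field K] [LinearOrder K]
    [IsStrictOrderedRing K] {a b c d : K} (hab : a < b) (hcd : c < d) :
    ∃ φ : K ≃o K, φ a = c ∧ φ b = d := by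
  have hslope : 0 < (d - c) / (b - a) := div_pos (sub_pos.2 hcd) (sub_pos.2 hab)
  refine ⟨((OrderIso.addRight (-a)).trans (OrderIso.mulLeft₀ _ hslope)).trans
    (OrderIso.addRight c), by simp, ?_⟩
  simp [← sub_eq_add_neg, div_mul_cancel₀ _ (sub_pos.2 hab).ne']

lemma IsDescentOn.exists_isOrderConjOn_apply_eq {F G : ℝ ≃o ℝ} {S T : Set ℝ}
    (hF : IsDescentOn F S) (hG : IsDescentOn G T) {x₀ y₀ : ℝ} (hx₀ : x₀ ∈ S) (hy₀ : y₀ ∈ T) :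
    ∃ h, IsOrderConjOn h F G S T ∧ h x₀ = y₀ := by
  obtain ⟨φ, hφ, rfl⟩ := exists_orderIso_apply_eq_apply_eq (hF.map_lt x₀ hx₀) (hG.map_lt y₀ hy₀)
  exact hF.exists_isOrderConjOn hG hx₀ hy₀ hφ

section RepellerAttractor

/-- `F` has precisely the fixed points `a ≤ b`; when they differ, `a` is repelling and `b`
attracting, and when they coincide the fixed point is semi-stable. -/
structure IsRepellerAttractor (F : ℝ ≃o ℝ) (a b : ℝ) : Prop where
  le : a ≤ b
  map_left : F a = a
  map_right : F b = b
  map_lt_of_lt : ∀ x < a, F x < x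
  lt_map : ∀ x ∈ Ioo a b, x < F x
  map_lt_of_gt : ∀ x > b, F x < x

namespace IsRepellerAttractor

variable {F G : ℝ ≃o ℝ} {a b a' b' : ℝ}

lemma map_lt_left_iff (hF : IsRepellerAttractor F a b) (x : ℝ) : F x < a ↔ x < a := by
  simpa only [hF.map_left] using F.lt_iff_lt (x := x) (y := a)

lemma left_lt_map_iff (hF : IsRepellerAttractor F a b) (x : ℝ) : a < F x ↔ a < x := by
  simpa only [hF.map_left] using F.lt_iff_lt (x := a) (y := x)

lemma map_lt_right_iff (hF : IsRepellerAttractor F a b) (x : ℝ) : F x < b ↔ x < b := by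
  simpa only [hF.map_right] using F.lt_iff_lt (x := x) (y := b)

lemma right_lt_map_iff (hF : IsRepellerAttractor F a b) (x : ℝ) : b < F x ↔ b < x := by
  simpa only [hF.map_right] using F.lt_iff_lt (x := b) (y := x)

lemma isDescentOn_Iio (hF : IsRepellerAttractor F a b) : IsDescentOn F (Iio a) :=
  ⟨ordConnected_Iio, hF.map_lt_left_iff, hF.map_lt_of_lt⟩

lemma isDescentOn_Ioi (hF : IsRepellerAttractor F a b) : IsDescentOn F (Ioi b) :=
  ⟨ordConnected_Ioi, hF.right_lt_map_iff, hF.map_lt_of_gt⟩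

lemma map_mem_Ioo_iff (hF : IsRepellerAttractor F a b) (x : ℝ) : F x ∈ Ioo a b ↔ x ∈ Ioo a b :=
  and_congr (hF.left_lt_map_iff x) (hF.map_lt_right_iff x)

lemma isDescentOn_symm_Ioo (hF : IsRepellerAttractor F a b) : IsDescentOn F.symm (Ioo a b) where
  ordConnected := ordConnected_Ioo
  map_mem_iff x := by rw [← hF.map_mem_Ioo_iff, F.apply_symm_apply]
  map_lt x hx := F.symm_apply_lt.2 (hF.lt_map x hx)

lemma exists_isOrderConjOn_Icc (hF : IsRepellerAttractor F a b) (hG : IsRepellerAttractor G a' b')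
    (hab : a = b ↔ a' = b') : ∃ h, IsOrderConjOn h F G (Icc a b) (Icc a' b') := by
  rcases hF.le.eq_or_lt with heq | hlt
  · rw [← heq, ← hab.1 heq, Icc_self, Icc_self]
    exact ⟨_, .singleton hF.map_left hG.map_left⟩
  · have hlt' : a' < b' := hG.le.lt_of_ne fun heq => hlt.ne (hab.2 heq)
    obtain ⟨x₀, hx₀⟩ := nonempty_Ioo.2 hlt
    obtain ⟨y₀, hy₀⟩ := nonempty_Ioo.2 hlt'
    obtain ⟨h, hh, -⟩ := hF.isDescentOn_symm_Ioo.exists_isOrderConjOn_apply_eq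
      hG.isDescentOn_symm_Ioo hx₀ hy₀
    have hIoo : IsOrderConjOn h F G (Ioo a b) (Ioo a' b') :=
      hh.of_symm fun x hx => (hF.map_mem_Ioo_iff x).2 hx
    have hIco := (IsOrderConjOn.singleton hF.map_left hG.map_left).union hIoo
      (by simp +contextual) (by simp +contextual)
    rw [singleton_union, Ioo_insert_left hlt, singleton_union, Ioo_insert_left hlt'] at hIco
    have hIcc := hIco.union (.singleton hF.map_right hG.map_right)
      (by simp +contextual) (by simp +contextual)
    rw [Ico_union_right hF.le, Ico_union_right hG.le] at hIcc
    exact ⟨_, hIcc⟩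

theorem exists_semiconj (hF : IsRepellerAttractor F a b) (hG : IsRepellerAttractor G a' b')
    (hab : a = b ↔ a' = b') {x x' y y' : ℝ} (hx : x < a) (hx' : x' < a') (hy : b < y)
    (hy' : b' < y') : ∃ h : ℝ ≃o ℝ, Semiconj h F G ∧ h x = x' ∧ h y = y' := by
  obtain ⟨hl, cl, hlx⟩ :=
    hF.isDescentOn_Iio.exists_isOrderConjOn_apply_eq hG.isDescentOn_Iio hx hx'
  obtain ⟨hm, cm⟩ := hF.exists_isOrderConjOn_Icc hG hab
  obtain ⟨hr, cr, hry⟩ :=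
    hF.isDescentOn_Ioi.exists_isOrderConjOn_apply_eq hG.isDescentOn_Ioi hy hy'
  have c := cl.union (cm.union cr (fun x hx y hy => hx.2.trans_lt hy)
      (fun x hx y hy => hx.2.trans_lt hy))
    (by rintro x hx y (hy | hy); exacts [hx.trans_le hy.1, (hx.trans_le hF.le).trans hy])
    (by rintro x hx y (hy | hy); exacts [hx.trans_le hy.1, (hx.trans_le hG.le).trans hy])
  rw [Icc_union_Ioi_eq_Ici hF.le, Icc_union_Ioi_eq_Ici hG.le, Iio_union_Ici, Iio_union_Ici] at c
  obtain ⟨h, heq, hsemi⟩ := c.exists_orderIso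
  refine ⟨h, hsemi, ?_, ?_⟩
  · rw [heq, piecewise_eq_of_mem _ _ _ (mem_Iio.2 hx), hlx]
  · rw [heq, piecewise_eq_of_notMem _ _ _ (notMem_Iio.2 (hF.le.trans hy.le)),
      piecewise_eq_of_notMem _ _ _ (notMem_Icc_of_gt hy), hry]

end IsRepellerAttractor

end RepellerAttractor

end OrderConjugacy

section Folds

open Set Function Filter Topology

/-- `f` is continuous and increasing on `S`, while its displacement `f x - x` increases up to `0`
and decreases afterwards, as the graph of a border-collision or saddle-node normal form does. -/
structure IsFoldOn (f : ℝ → ℝ) (S : Set ℝ) : Prop where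
  continuousOn : ContinuousOn f S
  strictMonoOn : StrictMonoOn f S
  strictMonoOn_sub : StrictMonoOn (fun x => f x - x) (S ∩ Iic 0)
  strictAntiOn_sub : StrictAntiOn (fun x => f x - x) (S ∩ Ici 0)

namespace IsFoldOn

variable {f : ℝ → ℝ} {S T : Set ℝ}

lemma mono (hf : IsFoldOn f T) (hST : S ⊆ T) : IsFoldOn f S where
  continuousOn := hf.continuousOn.mono hST
  strictMonoOn := hf.strictMonoOn.mono hST
  strictMonoOn_sub := hf.strictMonoOn_sub.mono (inter_subset_inter_left _ hST)
  strictAntiOn_sub := hf.strictAntiOn_sub.mono (inter_subset_inter_left _ hST)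

lemma lt_add (hf : IsFoldOn f S) (h0 : 0 ∈ S) {x : ℝ} (hx : x ∈ S) (hne : x ≠ 0) :
    f x < x + f 0 := by
  rcases hne.lt_or_gt with hlt | hgt
  · have := hf.strictMonoOn_sub ⟨hx, hlt.le⟩ ⟨h0, self_mem_Iic⟩ hlt
    dsimp only at this
    linarith
  · have := hf.strictAntiOn_sub ⟨h0, self_mem_Ici⟩ ⟨hx, hgt.le⟩ hgt
    dsimp only at this
    linarith

lemma eq_zero_of_isFixedPt (hf : IsFoldOn f S) (h0 : 0 ∈ S) (hf0 : f 0 = 0) {x : ℝ} (hx : x ∈ S)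
    (hfix : IsFixedPt f x) : x = 0 := by
  by_contra hne
  simpa [hf0, hfix.eq] using hf.lt_add h0 hx hne

end IsFoldOn

section Extension

variable {f g p : ℝ → ℝ} {S T : Set ℝ} {a b s : ℝ}

lemma strictMonoOn_comp_add_mul_sub (hg : StrictMonoOn g S) (hp : Monotone p)
    (hsub : Monotone fun x => x - p x) (hpT : MapsTo p T S) (hs : 0 < s) :
    StrictMonoOn (fun x => g (p x) + s * (x - p x)) T := by
  intro x hx y hy hxy
  rcases (hp hxy.le).eq_or_lt with heq | hlt
  · simpa only [heq, add_lt_add_iff_left, mul_lt_mul_iff_right₀ hs, sub_lt_sub_iff_right] using hxy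
  · exact add_lt_add_of_lt_of_le (hg (hpT hx) (hpT hy) hlt)
      (mul_le_mul_of_nonneg_left (hsub hxy.le) hs.le)

lemma monotone_sub_max (a : ℝ) : Monotone fun x => x - max x a := fun x y hxy => by
  linarith [min_le_min_right a hxy, min_add_max x a, min_add_max y a]

lemma monotone_sub_min (b : ℝ) : Monotone fun x => x - min x b := fun x y hxy => by
  linarith [max_le_max_right b hxy, min_add_max x b, min_add_max y b]

-- Prolonging `f` with slope `2` on the left keeps both `f x` and `f x - x` increasing.
lemma IsFoldOn.exists_extension_Iic (hf : IsFoldOn f (Icc a b)) (ha : a ≤ 0) (hb : 0 ≤ b) :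
    ∃ g, IsFoldOn g (Iic b) ∧ EqOn g f (Icc a b) := by
  have heq : EqOn (fun x => f (max x a) + 2 * (x - max x a)) f (Ici a) := fun x hx => by
    simp [max_eq_left (mem_Ici.1 hx)]
  have hmaps : MapsTo (max · a) (Iic b) (Icc a b) := fun x hx =>
    ⟨le_max_right x a, max_le hx (ha.trans hb)⟩
  have hmono : Monotone (max · a) := fun _ _ h => max_le_max_right a h
  refine ⟨fun x => f (max x a) + 2 * (x - max x a), ⟨?_, ?_, ?_, ?_⟩,
    heq.mono Icc_subset_Ici_self⟩
  · exact (hf.continuousOn.comp (by fun_prop) hmaps).add (by fun_prop)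
  · exact strictMonoOn_comp_add_mul_sub hf.strictMonoOn hmono (monotone_sub_max a) hmaps two_pos
  · have := strictMonoOn_comp_add_mul_sub hf.strictMonoOn_sub hmono (monotone_sub_max a)
      (T := Iic b ∩ Iic 0) (fun x hx => ⟨hmaps hx.1, max_le hx.2 ha⟩) one_pos
    exact this.congr fun x _ => by ring
  · have hsub : Iic b ∩ Ici 0 ⊆ Icc a b ∩ Ici 0 := fun x hx => ⟨⟨ha.trans hx.2, hx.1⟩, hx.2⟩
    exact (hf.strictAntiOn_sub.mono hsub).congr fun x hx => by
      simp only [max_eq_left (ha.trans hx.2), sub_self, mul_zero, add_zero]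

-- Prolonging `f` with slope `1 / 2` on the right keeps `f x` increasing and `f x - x` decreasing.
lemma IsFoldOn.exists_extension_univ (hf : IsFoldOn f (Iic b)) (hb : 0 ≤ b) :
    ∃ g, IsFoldOn g univ ∧ EqOn g f (Iic b) ∧ Tendsto g atTop atTop := by
  have heq : EqOn (fun x => f (min x b) + 1 / 2 * (x - min x b)) f (Iic b) := fun x hx => by
    simp [min_eq_left (mem_Iic.1 hx)]
  have hmaps : MapsTo (min · b) univ (Iic b) := fun x _ => min_le_right x b
  have hmono : Monotone (min · b) := fun _ _ h => min_le_min_right b h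
  refine ⟨fun x => f (min x b) + 1 / 2 * (x - min x b), ⟨?_, ?_, ?_, ?_⟩, heq, ?_⟩
  · exact (hf.continuousOn.comp (by fun_prop) hmaps).add (by fun_prop)
  · exact strictMonoOn_comp_add_mul_sub hf.strictMonoOn hmono (monotone_sub_min b) hmaps
      one_half_pos
  · have hsub : univ ∩ Iic 0 ⊆ Iic b ∩ Iic 0 := fun x hx => ⟨hx.2.trans hb, hx.2⟩
    exact (hf.strictMonoOn_sub.mono hsub).congr fun x hx => by
      simp only [min_eq_left (hx.2.trans hb), sub_self, mul_zero, add_zero]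
  · have := strictMonoOn_comp_add_mul_sub hf.strictAntiOn_sub.neg hmono (monotone_sub_min b)
      (T := univ ∩ Ici 0) (fun x hx => ⟨hmaps hx.1, le_min hx.2 hb⟩) one_half_pos
    exact this.neg.congr fun x _ => by ring
  · have hlin : Tendsto (fun x : ℝ => f b + 1 / 2 * (x - b)) atTop atTop :=
      tendsto_atTop_add_const_left _ _
        ((tendsto_atTop_add_const_right _ _ tendsto_id).const_mul_atTop one_half_pos)
    exact hlin.congr' ((eventually_ge_atTop b).mono fun x hx => by simp [min_eq_right hx])

lemma IsFoldOn.exists_orderIso (hf : IsFoldOn f univ) (htop : Tendsto f atTop atTop) :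
    ∃ F : ℝ ≃o ℝ, ⇑F = f := by
  have hbot : Tendsto f atBot atBot :=
    tendsto_atBot_mono' _ ((eventually_lt_atBot 0).mono fun x hx =>
      (hf.lt_add (mem_univ _) (mem_univ x) hx.ne).le)
      (tendsto_atBot_add_const_right _ _ tendsto_id)
  have hcont : Continuous f := continuousOn_univ.1 hf.continuousOn
  exact ⟨(strictMonoOn_univ.1 hf.strictMonoOn).orderIsoOfSurjective f
    (hcont.surjective htop hbot), rfl⟩

lemma IsFoldOn.exists_orderIso_eqOn (hf : IsFoldOn f (Iic b)) (hb : 0 ≤ b) :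
    ∃ F : ℝ ≃o ℝ, IsFoldOn F univ ∧ EqOn F f (Iic b) := by
  obtain ⟨g, hg, heq, htop⟩ := hf.exists_extension_univ hb
  obtain ⟨F, rfl⟩ := hg.exists_orderIso htop
  exact ⟨F, hg, heq⟩

end Extension

section TrappedFold

/-- A fold on `S` which moves both endpoints `±r` of a neighbourhood of `0` down, but does not move
the fold point `0` out of it on the left. -/
structure IsTrappedFold (f : ℝ → ℝ) (S : Set ℝ) (r : ℝ) : Prop where
  isFoldOn : IsFoldOn f S
  pos : 0 < r
  neg_lt_map_zero : -r < f 0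
  map_neg_lt : f (-r) < -r
  map_lt : f r < r

lemma IsTrappedFold.congr {f g : ℝ → ℝ} {S T : Set ℝ} {r : ℝ} (hf : IsTrappedFold f S r)
    (hg : IsFoldOn g T) (heq : EqOn g f (Icc (-r) r)) : IsTrappedFold g T r := by
  have hr := hf.pos
  refine ⟨hg, hr, ?_, ?_, ?_⟩
  · rw [heq ⟨by linarith, hr.le⟩]; exact hf.neg_lt_map_zero
  · rw [heq ⟨le_rfl, by linarith⟩]; exact hf.map_neg_lt
  · rw [heq ⟨by linarith, le_rfl⟩]; exact hf.map_lt

lemma IsTrappedFold.exists_isRepellerAttractor {F : ℝ ≃o ℝ} {r : ℝ} (hF : IsTrappedFold F univ r)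
    (h0 : 0 ≤ F 0) :
    ∃ a ∈ Ioc (-r) 0, ∃ b ∈ Ico 0 r, IsRepellerAttractor F a b ∧ (a = b ↔ F 0 = 0) := by
  have hfold := hF.isFoldOn
  have hcont : Continuous fun x => F x - x := F.continuous.sub continuous_id
  obtain ⟨a, ha, hFa⟩ : (0 : ℝ) ∈ (fun x => F x - x) '' Ioc (-r) 0 :=
    intermediate_value_Ioc (neg_nonpos.2 hF.pos.le) hcont.continuousOn
      ⟨sub_neg.2 hF.map_neg_lt, by simpa using h0⟩
  obtain ⟨b, hb, hFb⟩ : (0 : ℝ) ∈ (fun x => F x - x) '' Ico 0 r :=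
    intermediate_value_Ico' hF.pos.le hcont.continuousOn
      ⟨sub_neg.2 hF.map_lt, by simpa using h0⟩
  dsimp only at hFa hFb
  have hleft : ∀ {x y}, x < y → y ≤ 0 → F x - x < F y - y := fun hxy hy =>
    hfold.strictMonoOn_sub ⟨mem_univ _, hxy.le.trans hy⟩ ⟨mem_univ _, hy⟩ hxy
  have hright : ∀ {x y}, 0 ≤ x → x < y → F y - y < F x - x := fun hx hxy =>
    hfold.strictAntiOn_sub ⟨mem_univ _, hx⟩ ⟨mem_univ _, hx.trans hxy.le⟩ hxy
  refine ⟨a, ha, b, hb, ⟨ha.2.trans hb.1, sub_eq_zero.1 hFa, sub_eq_zero.1 hFb, ?_, ?_, ?_⟩, ?_⟩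
  · exact fun x hx => sub_neg.1 (hFa ▸ hleft hx ha.2)
  · rintro x ⟨hax, hxb⟩
    rcases le_total x 0 with hx | hx
    · exact sub_pos.1 (hFa ▸ hleft hax hx)
    · exact sub_pos.1 (hFb ▸ hright hx hxb)
  · exact fun x hx => sub_neg.1 (hFb ▸ hright hb.1 hx)
  · constructor
    · rintro rfl
      rw [le_antisymm ha.2 hb.1] at hFa
      simpa using hFa
    · intro hF0
      rw [hfold.eq_zero_of_isFixedPt (mem_univ _) hF0 (mem_univ a) (sub_eq_zero.1 hFa),
        hfold.eq_zero_of_isFixedPt (mem_univ _) hF0 (mem_univ b) (sub_eq_zero.1 hFb)]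

lemma IsFoldOn.isDescentOn_univ {F : ℝ ≃o ℝ} (hF : IsFoldOn F univ) (h0 : F 0 < 0) :
    IsDescentOn F univ := by
  refine ⟨ordConnected_univ, fun x => by simp, fun x _ => ?_⟩
  rcases eq_or_ne x 0 with rfl | hne
  · exact h0
  · linarith [hF.lt_add (mem_univ _) (mem_univ x) hne]

theorem IsTrappedFold.exists_semiconj {F G : ℝ ≃o ℝ} {δ c : ℝ} (hF : IsTrappedFold F univ δ)
    (hG : IsTrappedFold G univ c) (h0 : F 0 = G 0) :
    ∃ h : ℝ ≃o ℝ, Semiconj h F G ∧ h (-δ) < 0 ∧ 0 < h δ ∧ h δ ≤ c := by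
  rcases le_or_gt 0 (F 0) with hν | hν
  · obtain ⟨a, ha, b, hb, hFab, hF0⟩ := hF.exists_isRepellerAttractor hν
    obtain ⟨a', ha', b', hb', hGab, hG0⟩ := hG.exists_isRepellerAttractor (h0 ▸ hν)
    obtain ⟨h, hsemi, hneg, hpos⟩ := hFab.exists_semiconj hGab (by rw [hF0, hG0, h0])
      ha.1 ha'.1 hb.2 hb'.2
    exact ⟨h, hsemi, hneg ▸ neg_neg_of_pos hG.pos, hpos ▸ hG.pos, hpos.le⟩
  · -- Sending `δ` to `-F 0` makes `G (h δ)` negative, while `-δ < F 0 < F δ`.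
    have hν' : G 0 < 0 := h0 ▸ hν
    obtain ⟨k, hk, hkδ⟩ := (hF.isFoldOn.isDescentOn_univ hν).exists_isOrderConjOn_apply_eq
      (hG.isFoldOn.isDescentOn_univ hν') (mem_univ δ) (mem_univ (-G 0))
    obtain ⟨h, rfl, hsemi⟩ := hk.exists_orderIso
    refine ⟨h, hsemi, ?_, by linarith, by linarith [hG.neg_lt_map_zero]⟩
    calc h (-δ) < h (F δ) :=
          h.strictMono (hF.neg_lt_map_zero.trans (F.strictMono hF.pos))
      _ = G (-G 0) := by rw [hsemi.eq, hkδ]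
      _ < 0 := by linarith [hG.isFoldOn.lt_add (mem_univ _) (mem_univ (-G 0)) (by linarith)]

theorem IsTrappedFold.exists_orderIso_conj {f g : ℝ → ℝ} {δ c : ℝ}
    (hf : IsTrappedFold f (Icc (-δ) δ) δ) (hg : IsTrappedFold g (Iic c) c) (h0 : f 0 = g 0) :
    ∃ h : ℝ ≃o ℝ, 0 ∈ h '' Ioo (-δ) δ ∧ ∀ x ∈ Ioo (-δ) δ, h (f x) = g (h x) := by
  have hδ := hf.pos
  have hc := hg.pos
  obtain ⟨f', hf', hf'f⟩ := hf.isFoldOn.exists_extension_Iic (neg_nonpos.2 hδ.le) hδ.le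
  obtain ⟨F, hF, hFf'⟩ := hf'.exists_orderIso_eqOn hδ.le
  obtain ⟨G, hG, hGg⟩ := hg.isFoldOn.exists_orderIso_eqOn hc.le
  have hFf : EqOn F f (Icc (-δ) δ) := (hFf'.mono Icc_subset_Iic_self).trans hf'f
  have hF0 : F 0 = f 0 := hFf ⟨by linarith, hδ.le⟩
  obtain ⟨h, hsemi, hneg, hpos, hle⟩ := (hf.congr hF hFf).exists_semiconj
    (hg.congr hG (hGg.mono Icc_subset_Iic_self)) (by rw [hF0, h0, hGg hc.le])
  refine ⟨h, ⟨h.symm 0, ⟨h.lt_symm_apply.2 hneg, h.symm_apply_lt.2 hpos⟩, h.apply_symm_apply 0⟩,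
    fun x hx => ?_⟩
  rw [← hFf (Ioo_subset_Icc_self hx), hsemi.eq, hGg ((h.monotone hx.2.le).trans hle)]

lemma eventually_isTrappedFold {ι : Type*} [TopologicalSpace ι] {f : ι → ℝ → ℝ} {S : Set ℝ}
    {r : ℝ} {i₀ : ι} (hr : 0 < r) (hS : {-r, 0, r} ⊆ S) (hfold : ∀ᶠ i in 𝓝 i₀, IsFoldOn (f i) S)
    (hcont : ∀ x ∈ S, ContinuousAt (f · x) i₀) (h0 : f i₀ 0 = 0) :
    ∀ᶠ i in 𝓝 i₀, IsTrappedFold (f i) S r := by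
  have hmem : -r ∈ S ∧ 0 ∈ S ∧ r ∈ S := by simpa [insert_subset_iff] using hS
  obtain ⟨hneg, hzero, hpos⟩ := hmem
  have hlt : ∀ x ∈ S, x ≠ 0 → f i₀ x < x := fun x hx hne => by
    simpa [h0] using hfold.self_of_nhds.lt_add hzero hx hne
  filter_upwards [hfold, (hcont 0 hzero).eventually_const_lt (h0 ▸ neg_neg_of_pos hr),
    (hcont _ hneg).eventually_lt_const (hlt _ hneg (neg_ne_zero.2 hr.ne')),
    (hcont _ hpos).eventually_lt_const (hlt _ hpos hr.ne')] with i hi hi0 hin hip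
  exact ⟨hi, hr, hi0, hin, hip⟩

end TrappedFold

end Folds

section NormalForms

open Set Filter Topology

variable {S : Set ℝ}

lemma isFoldOn_ite {L R : ℝ → ℝ} (h0 : 0 ∈ S) (hLR : L 0 = R 0)
    (hcL : ContinuousOn L (S ∩ Iic 0)) (hcR : ContinuousOn R (S ∩ Ici 0))
    (hL : StrictMonoOn (fun x => L x - x) (S ∩ Iic 0)) (hR : StrictMonoOn R (S ∩ Ici 0))
    (hR' : StrictAntiOn (fun x => R x - x) (S ∩ Ici 0)) :
    IsFoldOn (fun x => if x ≤ 0 then L x else R x) S := by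
  have heqL : ∀ x ∈ S ∩ Iic 0, L x = if x ≤ 0 then L x else R x := fun x hx => (if_pos hx.2).symm
  have heqR : ∀ x ∈ S ∩ Ici 0, R x = if x ≤ 0 then L x else R x := fun x hx => by
    rcases eq_or_lt_of_le (mem_Ici.1 hx.2) with rfl | hlt
    · simp [hLR]
    · exact (if_neg hlt.not_ge).symm
  refine ⟨ContinuousOn.if ?_ ?_ ?_, ?_, ?_, ?_⟩
  · rintro a ⟨-, ha⟩
    rw [Iic_def, frontier_Iic, mem_singleton_iff] at ha
    rw [ha, hLR]
  · simpa only [Iic_def, closure_Iic] using hcL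
  · simpa only [not_le, Ioi_def, closure_Ioi] using hcR
  · have hL' : StrictMonoOn L (S ∩ Iic 0) := (hL.add strictMonoOn_id).congr fun x _ => by simp
    rw [← inter_univ S, ← Iic_union_Ici (a := (0 : ℝ)), inter_union_distrib_left]
    exact (hL'.congr heqL).union (hR.congr heqR) ⟨⟨h0, self_mem_Iic⟩, fun x hx => hx.2⟩
      ⟨⟨h0, self_mem_Ici⟩, fun x hx => hx.2⟩
  · exact hL.congr fun x hx => by rw [← heqL x hx]
  · exact hR'.congr fun x hx => by rw [← heqR x hx]

lemma isFoldOn_ite_of_deriv {L R : ℝ → ℝ} (hS : S.OrdConnected) (h0 : 0 ∈ S) (hLR : L 0 = R 0)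
    (hL : ∀ x ∈ S, 1 < deriv L x) (hR : ∀ x ∈ S, deriv R x ∈ Ioo 0 1) :
    IsFoldOn (fun x => if x ≤ 0 then L x else R x) S := by
  have hdL : ∀ x ∈ S, DifferentiableAt ℝ L x := fun x hx =>
    differentiableAt_of_deriv_ne_zero (one_pos.trans (hL x hx)).ne'
  have hdR : ∀ x ∈ S, DifferentiableAt ℝ R x := fun x hx =>
    differentiableAt_of_deriv_ne_zero (hR x hx).1.ne'
  have hcL : ContinuousOn L S := fun x hx => (hdL x hx).continuousAt.continuousWithinAt
  have hcR : ContinuousOn R S := fun x hx => (hdR x hx).continuousAt.continuousWithinAt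
  have hsub {g : ℝ → ℝ} {x : ℝ} (hg : DifferentiableAt ℝ g x) :
      deriv (fun x => g x - x) x = deriv g x - 1 := by
    rw [deriv_fun_sub hg differentiableAt_fun_id, deriv_id'']
  refine isFoldOn_ite h0 hLR (hcL.mono inter_subset_left) (hcR.mono inter_subset_left)
    (StrictMonoOn.mono ?_ inter_subset_left) (StrictMonoOn.mono ?_ inter_subset_left)
    (StrictAntiOn.mono ?_ inter_subset_left)
  · exact strictMonoOn_of_deriv_pos hS.convex (hcL.sub continuousOn_id) fun x hx => by
      have hxS := interior_subset hx
      linarith [hsub (hdL x hxS), hL x hxS]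
  · exact strictMonoOn_of_deriv_pos hS.convex hcR fun x hx => (hR x (interior_subset hx)).1
  · exact strictAntiOn_of_deriv_neg hS.convex (hcR.sub continuousOn_id) fun x hx => by
      have hxS := interior_subset hx
      linarith [hsub (hdR x hxS), (hR x hxS).2]

lemma isFoldOn_piecewise_linear (ν : ℝ) {sL sR : ℝ} (hsL : 1 < sL) (hsR : sR ∈ Ioo 0 1) :
    IsFoldOn (fun y => if y ≤ 0 then ν + sL * y else ν + sR * y) S := by
  refine (isFoldOn_ite_of_deriv ordConnected_univ (mem_univ _) (by simp) ?_ ?_).mono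
    (subset_univ S)
  · simpa using hsL
  · simpa using hsR

lemma isFoldOn_quadratic (ν : ℝ) : IsFoldOn (fun y => ν + y - y ^ 2) (Iic (1 / 2)) where
  continuousOn := by fun_prop
  strictMonoOn x _ y hy hxy := by
    have : x + y < 1 := by linarith [mem_Iic.1 hy]
    nlinarith
  strictMonoOn_sub x _ y hy hxy := by
    have : x + y < 0 := by linarith [mem_Iic.1 hy.2]
    nlinarith
  strictAntiOn_sub x hx y _ hxy := by
    have : 0 < x + y := by linarith [mem_Ici.1 hx.2]
    nlinarith

variable {ι : Type*} [TopologicalSpace ι] {ν : ι → ℝ} {i₀ : ι}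

lemma eventually_isTrappedFold_piecewise_linear {sL sR : ℝ} (hsL : 1 < sL) (hsR : sR ∈ Ioo 0 1)
    (hν : ContinuousAt ν i₀) (hν0 : ν i₀ = 0) :
    ∀ᶠ i in 𝓝 i₀, IsTrappedFold (fun y => if y ≤ 0 then ν i + sL * y else ν i + sR * y)
      (Iic 1) 1 :=
  eventually_isTrappedFold one_pos (by simp [insert_subset_iff])
    (.of_forall fun _ => isFoldOn_piecewise_linear _ hsL hsR)
    (fun x _ => by split_ifs <;> fun_prop) (by simp [hν0])

lemma eventually_isTrappedFold_quadratic (hν : ContinuousAt ν i₀) (hν0 : ν i₀ = 0) :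
    ∀ᶠ i in 𝓝 i₀, IsTrappedFold (fun y => ν i + y - y ^ 2) (Iic (1 / 2)) (1 / 2) :=
  eventually_isTrappedFold one_half_pos (by norm_num [insert_subset_iff])
    (.of_forall fun _ => isFoldOn_quadratic _) (fun x _ => by fun_prop) (by simp [hν0])

end NormalForms

section SmoothFamilies

open Set Filter Topology

lemma continuousAt_deriv_fst {f : ℝ → ℝ → ℝ} {p : ℝ × ℝ}
    (hf : ContDiffAt ℝ 1 (fun q : ℝ × ℝ => f q.1 q.2) p) :
    ContinuousAt (fun q : ℝ × ℝ => deriv (fun x => f x q.2) q.1) p := by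
  have heq : ∀ᶠ q in 𝓝 p, fderiv ℝ (fun q : ℝ × ℝ => f q.1 q.2) q (1, 0) =
      deriv (fun x => f x q.2) q.1 := by
    filter_upwards [hf.eventually (by simp)] with q hq
    have hline : HasDerivAt (fun x : ℝ => (x, q.2)) (1, 0) q.1 :=
      (hasDerivAt_id q.1).prodMk (hasDerivAt_const q.1 q.2)
    exact ((hq.differentiableAt one_ne_zero).hasFDerivAt.comp_hasDerivAt q.1 hline).deriv.symm
  exact ((hf.continuousAt_fderiv one_ne_zero).clm_apply continuousAt_const).congr heq

lemma eventually_Icc_neg_subset {s : Set ℝ} (hs : s ∈ 𝓝 0) :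
    ∀ᶠ δ in 𝓝[>] (0 : ℝ), Icc (-δ) δ ⊆ s := by
  obtain ⟨ε, hε, hεs⟩ := (nhds_basis_Ioo_pos (0 : ℝ)).mem_iff.1 hs
  filter_upwards [Ioo_mem_nhdsGT hε] with δ hδ t ht
  exact hεs ⟨by linarith [ht.1, hδ.2], by linarith [ht.2, hδ.2]⟩

lemma eventually_forall_mem_Icc_neg {X : Type*} [TopologicalSpace X] {x₀ : X} {P : ℝ × X → Prop}
    (hP : ∀ᶠ p in 𝓝 ((0 : ℝ), x₀), P p) :
    ∀ᶠ δ in 𝓝[>] (0 : ℝ), ∀ᶠ x in 𝓝 x₀, ∀ t ∈ Icc (-δ) δ, P (t, x) := by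
  rw [nhds_prod_eq] at hP
  obtain ⟨Q, hQ, R, hR, hQR⟩ := eventually_prod_iff.1 hP
  filter_upwards [eventually_Icc_neg_subset hQ] with δ hδ
  filter_upwards [hR] with x hx t ht
  exact hQR (hδ ht) hx

variable {fL fR : ℝ → ℝ → ℝ}

theorem eventually_isFoldOn_pwFam
    (hfL : ContDiffAt ℝ 1 (fun p : ℝ × ℝ => fL p.1 p.2) 0)
    (hfR : ContDiffAt ℝ 1 (fun p : ℝ × ℝ => fR p.1 p.2) 0)
    (hcont : ∀ᶠ μ in 𝓝 0, fL 0 μ = fR 0 μ)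
    (haL : 1 < deriv (fun x => fL x 0) 0) (haR : deriv (fun x => fR x 0) 0 ∈ Ioo 0 1) :
    ∀ᶠ δ in 𝓝[>] (0 : ℝ), ∀ᶠ μ in 𝓝 0, IsFoldOn (pwFam fL fR μ) (Icc (-δ) δ) := by
  have hL : ∀ᶠ p : ℝ × ℝ in 𝓝 (0, 0), 1 < deriv (fun x => fL x p.2) p.1 :=
    (continuousAt_deriv_fst hfL).eventually_const_lt haL
  have hR : ∀ᶠ p : ℝ × ℝ in 𝓝 (0, 0), deriv (fun x => fR x p.2) p.1 ∈ Ioo 0 1 :=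
    (continuousAt_deriv_fst hfR).eventually_mem (isOpen_Ioo.mem_nhds haR)
  filter_upwards [eventually_forall_mem_Icc_neg (hL.and hR), self_mem_nhdsWithin] with δ hδ hpos
  filter_upwards [hδ, hcont] with μ hμ hμ0
  exact isFoldOn_ite_of_deriv ordConnected_Icc ⟨neg_nonpos.2 (le_of_lt hpos), le_of_lt hpos⟩ hμ0
    (fun x hx => (hμ x hx).1) (fun x hx => (hμ x hx).2)

lemma continuousAt_pwFam {x μ : ℝ} (hfL : ContinuousAt (fun p : ℝ × ℝ => fL p.1 p.2) (x, μ))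
    (hfR : ContinuousAt (fun p : ℝ × ℝ => fR p.1 p.2) (x, μ)) :
    ContinuousAt (pwFam fL fR · x) μ := by
  have hline : ContinuousAt (fun m : ℝ => (x, m)) μ := by fun_prop
  by_cases hx : x ≤ 0
  · simpa only [pwFam, if_pos hx] using! hfL.comp_of_eq hline rfl
  · simpa only [pwFam, if_neg hx] using! hfR.comp_of_eq hline rfl

theorem eventually_isTrappedFold_pwFam
    (hfL : ContDiffAt ℝ 1 (fun p : ℝ × ℝ => fL p.1 p.2) 0)
    (hfR : ContDiffAt ℝ 1 (fun p : ℝ × ℝ => fR p.1 p.2) 0)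
    (hcont : ∀ᶠ μ in 𝓝 0, fL 0 μ = fR 0 μ) (hbcb : fL 0 0 = 0)
    (haL : 1 < deriv (fun x => fL x 0) 0) (haR : deriv (fun x => fR x 0) 0 ∈ Ioo 0 1) :
    ∀ᶠ δ in 𝓝[>] (0 : ℝ), ∀ᶠ μ in 𝓝 0, IsTrappedFold (pwFam fL fR μ) (Icc (-δ) δ) δ := by
  have hctsL : ∀ᶠ p : ℝ × ℝ in 𝓝 (0, 0), ContinuousAt (fun p : ℝ × ℝ => fL p.1 p.2) p :=
    (hfL.eventually (by simp)).mono fun _ hp => hp.continuousAt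
  have hctsR : ∀ᶠ p : ℝ × ℝ in 𝓝 (0, 0), ContinuousAt (fun p : ℝ × ℝ => fR p.1 p.2) p :=
    (hfR.eventually (by simp)).mono fun _ hp => hp.continuousAt
  filter_upwards [eventually_isFoldOn_pwFam hfL hfR hcont haL haR,
    eventually_forall_mem_Icc_neg (hctsL.and hctsR), self_mem_nhdsWithin] with δ hfold hcts hpos
  replace hpos : 0 < δ := hpos
  refine eventually_isTrappedFold hpos ?_ hfold (fun x hx => ?_) (by simpa [pwFam] using hbcb)
  · simp [insert_subset_iff, hpos.le, neg_le_self hpos.le]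
  · have := hcts.self_of_nhds x hx
    exact continuousAt_pwFam this.1 this.2

end SmoothFamilies

section Conjugacies

open Set Filter Topology

variable {f g g' : ℝ → ℝ} {U : Set ℝ}

lemma topConjOn_image (h : ℝ ≃o ℝ) (hconj : ∀ x ∈ U, h (f x) = g (h x)) :
    TopConjOn f g U (h '' U) :=
  ⟨h, ⟨h.injective.injOn.bijOn_image, h.continuous.continuousOn, h.symm,
      ⟨fun x _ => h.symm_apply_apply x, fun y _ => h.apply_symm_apply y⟩,
      h.symm.continuous.continuousOn⟩,
    fun x hx _ => hconj x hx⟩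

lemma topConjOn_image_image (h h' : ℝ ≃o ℝ) (hconj : ∀ x ∈ U, h (f x) = g (h x))
    (hconj' : ∀ x ∈ U, h' (f x) = g' (h' x)) : TopConjOn g g' (h '' U) (h' '' U) := by
  have himage : h' '' U = (h.symm.trans h') '' (h '' U) := by
    simp only [image_image, OrderIso.trans_apply, h.symm_apply_apply]
  rw [himage]
  refine topConjOn_image _ ?_
  rintro _ ⟨x, hx, rfl⟩
  simp only [OrderIso.trans_apply, ← hconj x hx, h.symm_apply_apply, hconj' x hx]

theorem IsTrappedFold.exists_topConjOn {δ c c' : ℝ}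
    (hf : IsTrappedFold f (Icc (-δ) δ) δ) (hg : IsTrappedFold g (Iic c) c)
    (hg' : IsTrappedFold g' (Iic c') c') (h0 : f 0 = g 0) (h0' : f 0 = g' 0) :
    ∃ M P : Set ℝ, IsOpen M ∧ 0 ∈ M ∧ IsOpen P ∧ 0 ∈ P ∧ TopConjOn f g (Ioo (-δ) δ) M ∧
      TopConjOn g g' M P ∧ TopConjOn f g' (Ioo (-δ) δ) P := by
  obtain ⟨h, hzero, hconj⟩ := hf.exists_orderIso_conj hg h0
  obtain ⟨h', hzero', hconj'⟩ := hf.exists_orderIso_conj hg' h0'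
  exact ⟨h '' Ioo (-δ) δ, h' '' Ioo (-δ) δ, h.toHomeomorph.isOpenMap _ isOpen_Ioo, hzero,
    h'.toHomeomorph.isOpenMap _ isOpen_Ioo, hzero', topConjOn_image h hconj,
    topConjOn_image_image h h' hconj hconj', topConjOn_image h' hconj'⟩

theorem eventually_exists_topConjOn_pwFam {fL fR : ℝ → ℝ → ℝ} {sL sR : ℝ}
    (hfL : ContDiffAt ℝ 1 (fun p : ℝ × ℝ => fL p.1 p.2) 0)
    (hfR : ContDiffAt ℝ 1 (fun p : ℝ × ℝ => fR p.1 p.2) 0)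
    (hcont : ∀ᶠ μ in 𝓝 0, fL 0 μ = fR 0 μ) (hbcb : fL 0 0 = 0)
    (haL : 1 < deriv (fun x => fL x 0) 0) (haR : deriv (fun x => fR x 0) 0 ∈ Ioo 0 1)
    (hsL : 1 < sL) (hsR : sR ∈ Ioo 0 1) :
    ∀ᶠ δ in 𝓝[>] (0 : ℝ), ∀ᶠ μ in 𝓝 0, ∃ M P : Set ℝ, IsOpen M ∧ 0 ∈ M ∧ IsOpen P ∧ 0 ∈ P ∧
      TopConjOn (pwFam fL fR μ)
        (fun y => if y ≤ 0 then fL 0 μ + sL * y else fL 0 μ + sR * y) (Ioo (-δ) δ) M ∧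
      TopConjOn (fun y => if y ≤ 0 then fL 0 μ + sL * y else fL 0 μ + sR * y)
        (fun y => fL 0 μ + y - y ^ 2) M P ∧
      TopConjOn (pwFam fL fR μ) (fun y => fL 0 μ + y - y ^ 2) (Ioo (-δ) δ) P := by
  have hν : ContinuousAt (fL 0 ·) 0 :=
    hfL.continuousAt.comp_of_eq (f := fun μ : ℝ => ((0 : ℝ), μ)) (by fun_prop) rfl
  filter_upwards [eventually_isTrappedFold_pwFam hfL hfR hcont hbcb haL haR] with δ hδ
  filter_upwards [hδ, eventually_isTrappedFold_piecewise_linear hsL hsR hν hbcb,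
    eventually_isTrappedFold_quadratic hν hbcb] with μ hf hlin hquad
  exact hf.exists_topConjOn hlin hquad (by simp [pwFam]) (by simp [pwFam])

end Conjugacies

open Set Filter Topology in
theorem stmt3_general (ω₁ ω₂ ι₁ ι₂ aL aR sL sR : ℝ) (fL fR : ℝ → ℝ → ℝ)
    (hω₁ : ω₁ < 0) (hω₂ : 0 < ω₂) (hι₁ : ι₁ < 0) (hι₂ : 0 < ι₂)
    (hfL : ContDiffOn ℝ 1 (fun p : ℝ × ℝ => fL p.1 p.2) (Ioo ω₁ ω₂ ×ˢ Ioo ι₁ ι₂))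
    (hfR : ContDiffOn ℝ 1 (fun p : ℝ × ℝ => fR p.1 p.2) (Ioo ω₁ ω₂ ×ˢ Ioo ι₁ ι₂))
    (hcont : ∀ μ ∈ Ioo ι₁ ι₂, fL 0 μ = fR 0 μ)
    (hbcb : fL 0 0 = 0)
    (haL : deriv (fun x => fL x 0) 0 = aL)
    (haR : deriv (fun x => fR x 0) 0 = aR)
    (hL : 1 < aL) (hR0 : 0 < aR) (hR1 : aR < 1)
    (hsL : 1 < sL) (hsR0 : 0 < sR) (hsR1 : sR < 1) :
    ∃ μ₀ > 0, Ioo (-μ₀) μ₀ ⊆ Ioo ι₁ ι₂ ∧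
      ∃ N : Set ℝ, IsOpen N ∧ (0 : ℝ) ∈ N ∧ N ⊆ Ioo ω₁ ω₂ ∧
        ∃ M P : ℝ → Set ℝ, ∀ μ ∈ Ioo (-μ₀) μ₀,
          IsOpen (M μ) ∧ (0 : ℝ) ∈ M μ ∧ IsOpen (P μ) ∧ (0 : ℝ) ∈ P μ ∧
          TopConjOn (pwFam fL fR μ)
            (fun y => if y ≤ 0 then fL 0 μ + sL * y else fL 0 μ + sR * y) N (M μ) ∧
          TopConjOn (fun y => if y ≤ 0 then fL 0 μ + sL * y else fL 0 μ + sR * y)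
            (fun y => fL 0 μ + y - y ^ 2) (M μ) (P μ) ∧
          TopConjOn (pwFam fL fR μ) (fun y => fL 0 μ + y - y ^ 2) N (P μ) := by
  subst haL haR
  have hI : Ioo ι₁ ι₂ ∈ 𝓝 0 := Ioo_mem_nhds hι₁ hι₂
  have hΩ : Ioo ω₁ ω₂ ∈ 𝓝 0 := Ioo_mem_nhds hω₁ hω₂
  have hconj := eventually_exists_topConjOn_pwFam (hfL.contDiffAt (prod_mem_nhds hΩ hI))
    (hfR.contDiffAt (prod_mem_nhds hΩ hI)) (eventually_of_mem hI hcont) hbcb hL ⟨hR0, hR1⟩ hsL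
    ⟨hsR0, hsR1⟩
  obtain ⟨δ, ⟨hδ, hδΩ⟩, hδpos : 0 < δ⟩ :=
    ((hconj.and (eventually_Icc_neg_subset hΩ)).and self_mem_nhdsWithin).exists
  obtain ⟨μ₀, hμ₀, hμ₀pos⟩ :=
    ((eventually_Icc_neg_subset (inter_mem hδ hI)).and self_mem_nhdsWithin).exists
  replace hμ₀ := Ioo_subset_Icc_self.trans hμ₀
  choose! M P hMP using fun μ (hμ : μ ∈ Ioo (-μ₀) μ₀) => mem_ofPred.1 (hμ₀ hμ).1
  exact ⟨μ₀, hμ₀pos, fun μ hμ => (hμ₀ hμ).2, Ioo (-δ) δ, isOpen_Ioo, by simpa using hδpos,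
    Ioo_subset_Icc_self.trans hδΩ, M, P, hMP⟩

/-- Proposition 3.1 (topological conjugacy of the piecewise-linear normal form and the
quadratic map at a saddle-node-like border-collision bifurcation).
Here `Ω = (ω₁, ω₂)` and `I = (ι₁, ι₂)` are the open intervals containing `0` on which the
piecewise-`C¹` family is defined, `aL, aR` are the one-sided slopes at the bifurcation,
and `β` is the common `μ`-derivative at the origin; `ν(μ) = f(0;μ) = f_L(0;μ)`. -/
theorem stmt3 (ω₁ ω₂ ι₁ ι₂ aL aR β sL sR : ℝ) (fL fR : ℝ → ℝ → ℝ)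
    (hω₁ : ω₁ < 0) (hω₂ : 0 < ω₂) (hι₁ : ι₁ < 0) (hι₂ : 0 < ι₂)
    (hfL : ContDiffOn ℝ 1 (fun p : ℝ × ℝ => fL p.1 p.2) (Set.Ioo ω₁ ω₂ ×ˢ Set.Ioo ι₁ ι₂))
    (hfR : ContDiffOn ℝ 1 (fun p : ℝ × ℝ => fR p.1 p.2) (Set.Ioo ω₁ ω₂ ×ˢ Set.Ioo ι₁ ι₂))
    (hcont : ∀ μ ∈ Set.Ioo ι₁ ι₂, fL 0 μ = fR 0 μ)
    (hbcb : fL 0 0 = 0)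
    (haL : deriv (fun x => fL x 0) 0 = aL)
    (haR : deriv (fun x => fR x 0) 0 = aR)
    (hβL : deriv (fun μ => fL 0 μ) 0 = β)
    (hβR : deriv (fun μ => fR 0 μ) 0 = β)
    (hβ : 0 < β)
    (hL : 1 < aL) (hR0 : 0 < aR) (hR1 : aR < 1)
    (hsL : 1 < sL) (hsR0 : 0 < sR) (hsR1 : sR < 1) :
    ∃ μ₀ > 0, Set.Ioo (-μ₀) μ₀ ⊆ Set.Ioo ι₁ ι₂ ∧
      ∃ N : Set ℝ, IsOpen N ∧ (0:ℝ) ∈ N ∧ N ⊆ Set.Ioo ω₁ ω₂ ∧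
        ∃ M P : ℝ → Set ℝ, ∀ μ ∈ Set.Ioo (-μ₀) μ₀,
          IsOpen (M μ) ∧ (0:ℝ) ∈ M μ ∧ IsOpen (P μ) ∧ (0:ℝ) ∈ P μ ∧
          TopConjOn (pwFam fL fR μ)
            (fun y => if y ≤ 0 then fL 0 μ + sL * y else fL 0 μ + sR * y) N (M μ) ∧
          TopConjOn (fun y => if y ≤ 0 then fL 0 μ + sL * y else fL 0 μ + sR * y)
            (fun y => fL 0 μ + y - y ^ 2) (M μ) (P μ) ∧
          TopConjOn (pwFam fL fR μ) (fun y => fL 0 μ + y - y ^ 2) N (P μ) :=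
  stmt3_general ω₁ ω₂ ι₁ ι₂ aL aR sL sR fL fR hω₁ hω₂ hι₁ hι₂ hfL hfR hcont hbcb haL haR hL hR0 hR1
    hsL hsR0 hsR1
end

section
/- Let (a,b) be an open interval containing 0 and let f : (a,b) → ℝ be C² with f′(x) < 0 for all x ∈ (a,b). Suppose 0 is a fixed point of f with f′(0) = λ ≠ −1, that f∘f has no fixed points in (a,b) other than 0, and that b < f(a). Define the linear map g(y) = λy. Then there exists an increasing C¹ diffeomorphism h from (f⁻¹(b), b) onto an open interval containing 0 such that h(f(x)) = g(h(x)) for all x ∈ (f⁻¹(b), b) with f(x) ∈ (f⁻¹(b), b). -/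
/-- `h` is a `C¹` diffeomorphism from `U` onto `V`. -/
def IsDiffeoOn (h : ℝ → ℝ) (U V : Set ℝ) : Prop :=
  Set.BijOn h U V ∧ ContDiffOn ℝ 1 h U ∧
    ∃ hinv : ℝ → ℝ, Set.InvOn hinv h U V ∧ ContDiffOn ℝ 1 hinv V

/-!
Put `J = (f⁻¹(b), b)`. Since `f` swaps the sides of `0` and has no other point of period two,
either `f` maps `J` into itself or its inverse does, according to whether `f(b)` lies to the right
or to the left of `f⁻¹(b)`. Let `φ` be that map. Its second iterate is increasing, sends the
closure of `J` into `J`, and has `0` as its only fixed point, so all orbits of `φ` in `J` converge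
to `0`; hence `|φ′(0)| ≤ 1`, and `φ′(0) ≠ -1` makes the inequality strict. Convergence to `0` is
then eventually geometric, so that `S = ∑ₙ log (φ′ / φ′(0)) ∘ φⁿ` is a continuous solution of
`S = log (φ′ / φ′(0)) + S ∘ φ`, and the primitive `h` of `exp S` vanishing at `0` satisfies
`h ∘ φ = φ′(0) h`. Its image is bounded because `φ′(0)² h = h ∘ φ²` and `φ²(J)` has compact
closure in `J`.
-/

open Set Filter Topology Function

section TopologicalPreliminaries

theorem eq_Ioo_csInf_csSup_of_isOpen_of_isConnected {α : Type*} [ConditionallyCompleteLinearOrder α]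
    [TopologicalSpace α] [OrderTopology α] [DenselyOrdered α] [NoMinOrder α] [NoMaxOrder α]
    {s : Set α} (ho : IsOpen s) (hc : IsConnected s) (hb : BddBelow s) (ha : BddAbove s) :
    s = Ioo (sInf s) (sSup s) := by
  refine Subset.antisymm ?_ (hc.Ioo_csInf_csSup_subset hb ha)
  rw [← interior_Icc]
  exact interior_maximal (subset_Icc_csInf_csSup hb ha) ho

theorem continuousOn_image_of_leftInvOn_of_isCompact {X Y : Type*} [TopologicalSpace X]
    [TopologicalSpace Y] [T2Space Y] {f : X → Y} {g : Y → X} {K : Set X} (hK : IsCompact K)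
    (hf : ContinuousOn f K) (hg : LeftInvOn g f K) : ContinuousOn g (f '' K) := by
  rw [continuousOn_iff_isClosed]
  intro t ht
  refine ⟨f '' (K ∩ t), ((hK.inter_right ht).image_of_continuousOn
    (hf.mono inter_subset_left)).isClosed, ?_⟩
  rw [inter_eq_left.2 (image_mono inter_subset_left), inter_comm K t, ← hg.image_inter']

theorem monotone_or_antitone_iterate {α : Type*} [LinearOrder α] {ψ : α → α} {s : Set α} {x : α}
    (hmono : MonotoneOn ψ s) (hmaps : MapsTo ψ s s) (hx : x ∈ s) :
    Monotone (fun n => ψ^[n] x) ∨ Antitone (fun n => ψ^[n] x) := by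
  have hmem : ∀ n, ψ^[n] x ∈ s := fun n => hmaps.iterate n hx
  rcases le_total x (ψ x) with hle | hle
  · refine Or.inl (monotone_nat_of_le_succ fun n => ?_)
    induction n with
    | zero => exact hle
    | succ n ih => simpa only [iterate_succ_apply'] using hmono (hmem n) (hmem (n + 1)) ih
  · refine Or.inr (antitone_nat_of_succ_le fun n => ?_)
    induction n with
    | zero => exact hle
    | succ n ih => simpa only [iterate_succ_apply'] using hmono (hmem (n + 1)) (hmem n) ih

theorem tendsto_iterate_of_monotoneOn_Icc {α : Type*} [ConditionallyCompleteLinearOrder α]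
    [TopologicalSpace α] [OrderTopology α] {ψ : α → α} {p q x z : α}
    (hmono : MonotoneOn ψ (Icc p q)) (hcont : ContinuousOn ψ (Icc p q))
    (hmaps : MapsTo ψ (Icc p q) (Icc p q)) (huniq : ∀ y ∈ Icc p q, ψ y = y → y = z)
    (hx : x ∈ Icc p q) : Tendsto (fun n => ψ^[n] x) atTop (𝓝 z) := by
  have hmem : ∀ n, ψ^[n] x ∈ Icc p q := fun n => hmaps.iterate n hx
  obtain ⟨L, hL⟩ : ∃ L, Tendsto (fun n => ψ^[n] x) atTop (𝓝 L) := by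
    rcases monotone_or_antitone_iterate hmono hmaps hx with hup | hdown
    · exact ⟨_, tendsto_atTop_ciSup hup ⟨q, forall_mem_range.2 fun n => (hmem n).2⟩⟩
    · exact ⟨_, tendsto_atTop_ciInf hdown ⟨p, forall_mem_range.2 fun n => (hmem n).1⟩⟩
  have hLmem : L ∈ Icc p q := isClosed_Icc.mem_of_tendsto hL (Eventually.of_forall hmem)
  have himage : Tendsto (fun n => ψ^[n + 1] x) atTop (𝓝 (ψ L)) := by
    simp only [iterate_succ_apply']
    exact (hcont L hLmem).tendsto.comp
      (tendsto_nhdsWithin_iff.2 ⟨hL, Eventually.of_forall hmem⟩)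
  have hfixed : ψ L = L := tendsto_nhds_unique himage ((tendsto_add_atTop_iff_nat 1).2 hL)
  rwa [huniq L hLmem hfixed] at hL

theorem tendsto_iterate_of_tendsto_iterate_two {X : Type*} [TopologicalSpace X] {φ : X → X}
    {x z : X} (hcont : ContinuousAt φ z) (hz : φ z = z)
    (h : Tendsto (fun n => (φ^[2])^[n] x) atTop (𝓝 z)) :
    Tendsto (fun n => φ^[n] x) atTop (𝓝 z) := by
  have heven : Tendsto (fun n => φ^[2 * n] x) atTop (𝓝 z) := by simpa only [iterate_mul] using h
  have hodd : Tendsto (fun n => φ^[2 * n + 1] x) atTop (𝓝 z) := by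
    simp only [iterate_succ_apply']
    exact (hcont.tendsto.comp heven).trans_eq (congrArg 𝓝 hz)
  intro U hU
  obtain ⟨N, hN⟩ := eventually_atTop.1 ((heven.eventually hU).and (hodd.eventually hU))
  refine mem_atTop_sets.2 ⟨2 * N, fun n hn => ?_⟩
  rcases n.even_or_odd' with ⟨k, rfl | rfl⟩
  · exact (hN k (by lia)).1
  · exact (hN k (by lia)).2

end TopologicalPreliminaries

/-- The sum `∑ s (φⁿ x)` over the forward orbit of `x`, the limit of Mathlib's `birkhoffSum`. It
solves the cohomological equation `S = s + S ∘ φ`; the value is `0` where the series diverges. -/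
noncomputable def birkhoffSeries {E F : Type*} [AddCommMonoid F] [TopologicalSpace F] (φ : E → E)
    (s : E → F) (x : E) : F :=
  ∑' n, s (φ^[n] x)

section Basin

variable {E F : Type*} [NormedAddCommGroup E] [NormedAddCommGroup F]

/-- `J` is an open forward-invariant neighbourhood of `0` on which `φ` is continuous and all of
whose points are attracted to `0`; it need not be the full basin of attraction. -/
structure IsBasinOfZero (φ : E → E) (J : Set E) : Prop where
  isOpen : IsOpen J
  zero_mem : 0 ∈ J
  mapsTo : MapsTo φ J J
  continuousOn : ContinuousOn φ J
  tendsto_iterate : ∀ x ∈ J, Tendsto (fun n => φ^[n] x) atTop (𝓝 0)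

theorem eventually_norm_iterate_le {φ : E → E} {ρ : ℝ} (hρ₀ : 0 ≤ ρ) (hρ₁ : ρ ≤ 1)
    (hφ : ∀ᶠ x in 𝓝 0, ‖φ x‖ ≤ ρ * ‖x‖) :
    ∀ᶠ x in 𝓝 0, ∀ n, ‖φ^[n] x‖ ≤ ρ ^ n * ‖x‖ := by
  obtain ⟨δ, hδ, hball⟩ := Metric.eventually_nhds_iff_ball.1 hφ
  filter_upwards [Metric.ball_mem_nhds 0 hδ] with x hx n
  induction n with
  | zero => simp
  | succ n ih =>
    have hmem : φ^[n] x ∈ Metric.ball 0 δ := by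
      rw [mem_ball_zero_iff] at hx ⊢
      exact (ih.trans (mul_le_of_le_one_left (norm_nonneg x) (pow_le_one₀ hρ₀ hρ₁))).trans_lt hx
    calc ‖φ^[n + 1] x‖ = ‖φ (φ^[n] x)‖ := by rw [iterate_succ_apply']
      _ ≤ ρ * ‖φ^[n] x‖ := hball _ hmem
      _ ≤ ρ * (ρ ^ n * ‖x‖) := by gcongr
      _ = ρ ^ (n + 1) * ‖x‖ := by ring

theorem exists_eventually_norm_comp_iterate_le {φ : E → E} {s : E → F} {ρ : ℝ} (hρ₀ : 0 ≤ ρ)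
    (hρ₁ : ρ ≤ 1) (hφ : ∀ᶠ x in 𝓝 0, ‖φ x‖ ≤ ρ * ‖x‖) (hs : s =O[𝓝 0] (fun x : E => x)) :
    ∃ C, ∀ᶠ x in 𝓝 0, ∀ n, ‖s (φ^[n] x)‖ ≤ C * ρ ^ n := by
  obtain ⟨C, hC, hbound⟩ := hs.exists_nonneg
  obtain ⟨δ, hδ, hball⟩ := Metric.eventually_nhds_iff_ball.1 hbound.bound
  refine ⟨C * δ, ?_⟩
  filter_upwards [eventually_norm_iterate_le hρ₀ hρ₁ hφ, Metric.ball_mem_nhds 0 hδ]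
    with x hiter hx n
  rw [mem_ball_zero_iff] at hx
  have hmem : φ^[n] x ∈ Metric.ball 0 δ := by
    rw [mem_ball_zero_iff]
    exact ((hiter n).trans
      (mul_le_of_le_one_left (norm_nonneg x) (pow_le_one₀ hρ₀ hρ₁))).trans_lt hx
  calc ‖s (φ^[n] x)‖ ≤ C * ‖φ^[n] x‖ := hball _ hmem
    _ ≤ C * (ρ ^ n * δ) := by gcongr; exact (hiter n).trans (by gcongr)
    _ = C * δ * ρ ^ n := by ring

namespace IsBasinOfZero

variable {φ : E → E} {J : Set E}

theorem map_zero (hJ : IsBasinOfZero φ J) : φ 0 = 0 :=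
  isFixedPt_of_tendsto_iterate (hJ.tendsto_iterate 0 hJ.zero_mem)
    (hJ.continuousOn.continuousAt (hJ.isOpen.mem_nhds hJ.zero_mem))

theorem induction_on (hJ : IsBasinOfZero φ J) {P : E → Prop} (hnear : ∀ᶠ x in 𝓝 0, P x)
    (hstep : ∀ x ∈ J, P (φ x) → P x) : ∀ x ∈ J, P x := by
  have hpull : ∀ n, ∀ x ∈ J, P (φ^[n] x) → P x := by
    intro n
    induction n with
    | zero => exact fun x _ hx => hx
    | succ n ih => exact fun x hx hPx => hstep x hx (ih (φ x) (hJ.mapsTo hx) hPx)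
  intro x hx
  obtain ⟨n, hn⟩ := ((hJ.tendsto_iterate x hx).eventually hnear).exists
  exact hpull n x hx hn

variable [CompleteSpace F] {s : E → F} {ρ : ℝ}

theorem summable_comp_iterate (hJ : IsBasinOfZero φ J) (hρ₀ : 0 ≤ ρ) (hρ₁ : ρ < 1)
    (hφ : ∀ᶠ x in 𝓝 0, ‖φ x‖ ≤ ρ * ‖x‖) (hs : s =O[𝓝 0] (fun x : E => x)) :
    ∀ x ∈ J, Summable (fun n => s (φ^[n] x)) := by
  obtain ⟨C, hC⟩ := exists_eventually_norm_comp_iterate_le hρ₀ hρ₁.le hφ hs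
  refine hJ.induction_on ?_ fun x _ hx => (summable_nat_add_iff 1).1 hx
  filter_upwards [hC] with x hx
  exact .of_norm_bounded ((summable_geometric_of_lt_one hρ₀ hρ₁).mul_left C) hx

theorem birkhoffSeries_eq_add (hJ : IsBasinOfZero φ J) (hρ₀ : 0 ≤ ρ) (hρ₁ : ρ < 1)
    (hφ : ∀ᶠ x in 𝓝 0, ‖φ x‖ ≤ ρ * ‖x‖) (hs : s =O[𝓝 0] (fun x : E => x)) {x : E} (hx : x ∈ J) :
    birkhoffSeries φ s x = s x + birkhoffSeries φ s (φ x) :=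
  (hJ.summable_comp_iterate hρ₀ hρ₁ hφ hs x hx).tsum_eq_zero_add

theorem continuousOn_birkhoffSeries (hJ : IsBasinOfZero φ J) (hρ₀ : 0 ≤ ρ) (hρ₁ : ρ < 1)
    (hφ : ∀ᶠ x in 𝓝 0, ‖φ x‖ ≤ ρ * ‖x‖) (hs : s =O[𝓝 0] (fun x : E => x))
    (hsc : ContinuousOn s J) : ContinuousOn (birkhoffSeries φ s) J := by
  suffices ∀ x ∈ J, ContinuousAt (birkhoffSeries φ s) x from
    fun x hx => (this x hx).continuousWithinAt
  refine hJ.induction_on ?_ fun x hx hφx => ?_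
  · obtain ⟨C, hC⟩ := exists_eventually_norm_comp_iterate_le hρ₀ hρ₁.le hφ hs
    obtain ⟨U, hU, hUo, h0U⟩ := eventually_nhds_iff.1
      (hC.and (hJ.isOpen.eventually_mem hJ.zero_mem))
    have hcont : ContinuousOn (birkhoffSeries φ s) U := by
      refine continuousOn_tsum (fun n => ?_)
        ((summable_geometric_of_lt_one hρ₀ hρ₁).mul_left C) fun n x hx => (hU x hx).1 n
      exact (hsc.comp (hJ.continuousOn.iterate hJ.mapsTo n) (hJ.mapsTo.iterate n)).mono
        fun x hx => (hU x hx).2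
    filter_upwards [hUo.mem_nhds h0U] with x hx using hcont.continuousAt (hUo.mem_nhds hx)
  · have hJx : J ∈ 𝓝 x := hJ.isOpen.mem_nhds hx
    have hsum : ContinuousAt (fun y => s y + birkhoffSeries φ s (φ y)) x :=
      (hsc.continuousAt hJx).add (hφx.comp (hJ.continuousOn.continuousAt hJx))
    refine hsum.congr ?_
    filter_upwards [hJx] with y hy using (hJ.birkhoffSeries_eq_add hρ₀ hρ₁ hφ hs hy).symm

end IsBasinOfZero

end Basin

section Multiplier

variable {𝕜 : Type*} [NontriviallyNormedField 𝕜] {φ : 𝕜 → 𝕜} {lam : 𝕜}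

theorem eventually_norm_le_mul_norm_of_hasDerivAt {ρ : ℝ} (hφ : HasDerivAt φ lam 0)
    (h0 : φ 0 = 0) (hρ : ‖lam‖ < ρ) : ∀ᶠ x in 𝓝 0, ‖φ x‖ ≤ ρ * ‖x‖ := by
  filter_upwards [hφ.isLittleO.def (sub_pos.2 hρ)] with x hx
  simp only [h0, sub_zero, smul_eq_mul] at hx
  calc ‖φ x‖ ≤ ‖φ x - x * lam‖ + ‖x * lam‖ := norm_le_norm_sub_add _ _
    _ ≤ (ρ - ‖lam‖) * ‖x‖ + ‖x‖ * ‖lam‖ := by gcongr; exact norm_mul_le _ _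
    _ = ρ * ‖x‖ := by ring

theorem eventually_norm_lt_norm_of_hasDerivAt (hφ : HasDerivAt φ lam 0) (h0 : φ 0 = 0)
    (hlam : 1 < ‖lam‖) : ∀ᶠ x in 𝓝[≠] 0, ‖x‖ < ‖φ x‖ := by
  filter_upwards [hφ.tendsto_slope.norm.eventually_const_lt hlam, self_mem_nhdsWithin] with x hx hx0
  rw [slope_def_field, h0, sub_zero, sub_zero, norm_div, lt_div_iff₀ (norm_pos_iff.2 hx0)] at hx
  simpa using hx

theorem norm_le_one_of_tendsto_iterate (hφ : HasDerivAt φ lam 0) (h0 : φ 0 = 0) {x : 𝕜}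
    (hne : ∀ n, φ^[n] x ≠ 0) (hx : Tendsto (fun n => φ^[n] x) atTop (𝓝 0)) : ‖lam‖ ≤ 1 := by
  by_contra! hlam
  have hpunct : Tendsto (fun n => φ^[n] x) atTop (𝓝[≠] 0) :=
    tendsto_nhdsWithin_iff.2 ⟨hx, Eventually.of_forall hne⟩
  obtain ⟨N, hN⟩ := eventually_atTop.1
    (hpunct.eventually (eventually_norm_lt_norm_of_hasDerivAt hφ h0 hlam))
  have hgrow : ∀ n ≥ N, ‖φ^[N] x‖ ≤ ‖φ^[n] x‖ := by
    intro n hn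
    induction n, hn using Nat.le_induction with
    | base => rfl
    | succ n hn ih =>
      rw [iterate_succ_apply']
      exact ih.trans (hN n hn).le
  have hle : ‖φ^[N] x‖ ≤ ‖(0 : 𝕜)‖ :=
    ge_of_tendsto hx.norm (eventually_atTop.2 ⟨N, hgrow⟩)
  exact hne N (norm_le_zero_iff.1 (hle.trans_eq norm_zero))

end Multiplier

section InverseFunction

variable {𝕜 : Type*} [RCLike 𝕜] {f g h : 𝕜 → 𝕜} {U : Set 𝕜}

theorem contDiffAt_of_eventually_leftInverse {n : WithTop ℕ∞} {x : 𝕜} (hn : n ≠ 0)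
    (hf : ContDiffAt 𝕜 n f x) (hf' : deriv f x ≠ 0) (hg : ∀ᶠ y in 𝓝 x, g (f y) = y) :
    ContDiffAt 𝕜 n g (f x) := by
  have hstrict := (hf.hasStrictDerivAt hn).hasStrictFDerivAt_equiv hf'
  exact (hf.to_localInverse hstrict.hasFDerivAt hn).congr_of_eventuallyEq
    (hstrict.localInverse_unique hg)

theorem deriv_of_eventually_leftInverse {x : 𝕜} (hf : ContDiffAt 𝕜 1 f x) (hf' : deriv f x ≠ 0)
    (hg : ∀ᶠ y in 𝓝 x, g (f y) = y) : deriv g (f x) = (deriv f x)⁻¹ :=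
  ((hf.hasStrictDerivAt one_ne_zero).to_local_left_inverse hf' hg).hasDerivAt.deriv

theorem isOpen_image_of_deriv_ne_zero (hU : IsOpen U) (hh : ContDiffOn 𝕜 1 h U)
    (hh' : ∀ x ∈ U, deriv h x ≠ 0) : IsOpen (h '' U) := by
  rw [isOpen_iff_mem_nhds]
  rintro _ ⟨x, hx, rfl⟩
  have hUx := hU.mem_nhds hx
  rw [← ((hh.contDiffAt hUx).hasStrictDerivAt one_ne_zero).map_nhds_eq (hh' x hx)]
  exact image_mem_map hUx

end InverseFunction

theorem isDiffeoOn_image {h : ℝ → ℝ} {U : Set ℝ} (hU : IsOpen U) (hinj : InjOn h U)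
    (hh : ContDiffOn ℝ 1 h U)
    (hh' : ∀ x ∈ U, deriv h x ≠ 0) : IsDiffeoOn h U (h '' U) := by
  have hinv : InvOn (invFunOn h U) h U (h '' U) := hinj.bijOn_image.invOn_invFunOn
  refine ⟨hinj.bijOn_image, hh, invFunOn h U, hinv, ?_⟩
  rintro _ ⟨x, hx, rfl⟩
  have hUx := hU.mem_nhds hx
  exact (contDiffAt_of_eventually_leftInverse one_ne_zero (hh.contDiffAt hUx) (hh' x hx)
    (by filter_upwards [hUx] with y hy using hinv.1 hy)).contDiffWithinAt

theorem contDiffOn_one_of_hasDerivAt {𝕜 F : Type*} [NontriviallyNormedField 𝕜]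
    [NormedAddCommGroup F] [NormedSpace 𝕜 F] {h u : 𝕜 → F} {U : Set 𝕜} (hU : IsOpen U)
    (hd : ∀ x ∈ U, HasDerivAt h (u x) x) (hu : ContinuousOn u U) : ContDiffOn 𝕜 1 h U := by
  rw [contDiffOn_one_iff_derivWithin hU.uniqueDiffOn]
  refine ⟨fun x hx => (hd x hx).differentiableAt.differentiableWithinAt, hu.congr fun x hx => ?_⟩
  rw [derivWithin_of_isOpen hU hx, (hd x hx).deriv]

theorem exists_hasDerivAt_of_continuousOn {F : Type*} [NormedAddCommGroup F] [NormedSpace ℝ F]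
    [CompleteSpace F] {u : ℝ → F} {U : Set ℝ} {x₀ : ℝ} (hU : IsOpen U) (hconn : U.OrdConnected)
    (hx₀ : x₀ ∈ U) (hu : ContinuousOn u U) :
    ∃ h : ℝ → F, h x₀ = 0 ∧ ∀ x ∈ U, HasDerivAt h (u x) x := by
  refine ⟨fun x => ∫ t in x₀..x, u t, intervalIntegral.integral_same, fun x hx => ?_⟩
  exact intervalIntegral.integral_hasDerivAt_right
    (hu.mono (hconn.uIcc_subset hx₀ hx)).intervalIntegrable
    (hu.stronglyMeasurableAtFilter hU x hx) (hu.continuousAt (hU.mem_nhds hx))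

section Linearization

variable {φ f g h u : ℝ → ℝ} {J K : Set ℝ} {lam : ℝ}

theorem iterate_conj_mul (hmaps : MapsTo φ J J) (hconj : ∀ x ∈ J, h (φ x) = lam * h x)
    (n : ℕ) : ∀ x ∈ J, h (φ^[n] x) = lam ^ n * h x := by
  induction n with
  | zero => simp
  | succ n ih =>
    intro x hx
    rw [iterate_succ_apply, ih (φ x) (hmaps hx), hconj x hx, pow_succ, mul_assoc]

theorem isBounded_image_of_conj_mul (hmaps : MapsTo φ J J) (hlam : lam ≠ 0)
    (hconj : ∀ x ∈ J, h (φ x) = lam * h x) (hh : ContinuousOn h J) (hK : IsCompact K)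
    (hKJ : K ⊆ J) {n : ℕ} (hn : MapsTo φ^[n] J K) : Bornology.IsBounded (h '' J) := by
  obtain ⟨C, hC⟩ := hK.exists_bound_of_continuousOn (hh.mono hKJ)
  refine isBounded_iff_forall_norm_le.2 ⟨C / ‖lam‖ ^ n, forall_mem_image.2 fun x hx => ?_⟩
  rw [le_div_iff₀' (by positivity), ← norm_pow, ← norm_mul, ← iterate_conj_mul hmaps hconj n x hx]
  exact hC _ (hn hx)

/-- `f` is linearized to `y ↦ lam * y` on `J` by an increasing `C¹` diffeomorphism of `J` onto a
bounded open interval around `0`. -/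
def HasC1Linearization (f : ℝ → ℝ) (lam : ℝ) (J : Set ℝ) : Prop :=
  ∃ c d : ℝ, c < 0 ∧ 0 < d ∧
    ∃ h : ℝ → ℝ, StrictMonoOn h J ∧ IsDiffeoOn h J (Ioo c d) ∧ ConjRelOn h f (fun y => lam * y) J

theorem HasC1Linearization.of_leftInvOn (hg : HasC1Linearization g lam⁻¹ J) (hlam : lam ≠ 0)
    (hgf : LeftInvOn g f J) : HasC1Linearization f lam J := by
  obtain ⟨c, d, hc, hd, h, hmono, hdiffeo, hconj⟩ := hg
  refine ⟨c, d, hc, hd, h, hmono, hdiffeo, fun x hx hfx => ?_⟩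
  have hinv : h x = lam⁻¹ * h (f x) := by
    simpa only [hgf hx] using hconj (f x) hfx (by rwa [hgf hx])
  exact (eq_inv_mul_iff_mul_eq₀ hlam).1 hinv |>.symm

namespace IsBasinOfZero

-- `u` is the derivative of the linearization, and `log u` solves the cohomological equation
-- `S = log (φ′ / φ′(0)) + S ∘ φ`.
theorem exists_pos_linearizing_density (hJ : IsBasinOfZero φ J) (hφ' : ContinuousOn (deriv φ) J)
    (hφ'' : DifferentiableAt ℝ (deriv φ) 0) (hpos : ∀ x ∈ J, 0 < deriv φ x / deriv φ 0)
    (hlam : |deriv φ 0| < 1) :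
    ∃ u : ℝ → ℝ, ContinuousOn u J ∧ (∀ x, 0 < u x) ∧
      ∀ x ∈ J, u (φ x) * deriv φ x = deriv φ 0 * u x := by
  have hlam0 : deriv φ 0 ≠ 0 := fun h0 => by simpa [h0] using hpos 0 hJ.zero_mem
  obtain ⟨ρ, hρ, hρ₁⟩ := exists_between hlam
  have hρ₀ : 0 ≤ ρ := (abs_nonneg _).trans hρ.le
  have hcontr : ∀ᶠ x in 𝓝 0, ‖φ x‖ ≤ ρ * ‖x‖ := eventually_norm_le_mul_norm_of_hasDerivAt
    (differentiableAt_of_deriv_ne_zero hlam0).hasDerivAt hJ.map_zero hρ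
  set s : ℝ → ℝ := fun x => Real.log (deriv φ x / deriv φ 0) with hs
  have hsO : s =O[𝓝 0] (fun x => x) := by
    have hdiff : DifferentiableAt ℝ s 0 :=
      (hφ''.div_const _).log (hpos 0 hJ.zero_mem).ne'
    simpa [hs, hlam0] using hdiff.isBigO_sub
  have hsc : ContinuousOn s J := (hφ'.div_const _).log fun x hx => (hpos x hx).ne'
  refine ⟨fun x => Real.exp (birkhoffSeries φ s x),
    (hJ.continuousOn_birkhoffSeries hρ₀ hρ₁ hcontr hsO hsc).rexp, fun x => Real.exp_pos _,
    fun x hx => ?_⟩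
  beta_reduce
  rw [hJ.birkhoffSeries_eq_add hρ₀ hρ₁ hcontr hsO hx, Real.exp_add, Real.exp_log (hpos x hx)]
  field_simp

theorem conj_mul_of_hasDerivAt (hJ : IsBasinOfZero φ J) (hconn : J.OrdConnected)
    (hφ : ∀ x ∈ J, DifferentiableAt ℝ φ x) (hh : ∀ x ∈ J, HasDerivAt h (u x) x) (h0 : h 0 = 0)
    (hu : ∀ x ∈ J, u (φ x) * deriv φ x = lam * u x) : ∀ x ∈ J, h (φ x) = lam * h x := by
  have hleft : ∀ x ∈ J, HasDerivAt (fun x => h (φ x)) (u (φ x) * deriv φ x) x := fun x hx =>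
    (hh (φ x) (hJ.mapsTo hx)).comp x (hφ x hx).hasDerivAt
  have hright : ∀ x ∈ J, HasDerivAt (fun x => lam * h x) (lam * u x) x := fun x hx =>
    (hh x hx).const_mul lam
  refine IsOpen.eqOn_of_deriv_eq hJ.isOpen hconn.isPreconnected
    (fun x hx => (hleft x hx).differentiableAt.differentiableWithinAt)
    (fun x hx => (hright x hx).differentiableAt.differentiableWithinAt) (fun x hx => ?_)
    hJ.zero_mem (by simp [hJ.map_zero, h0])
  rw [(hleft x hx).deriv, (hright x hx).deriv, hu x hx]

theorem hasC1Linearization (hJ : IsBasinOfZero φ J) (hconn : J.OrdConnected)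
    (hφ : ContDiffOn ℝ 1 φ J) (hφ'' : DifferentiableAt ℝ (deriv φ) 0)
    (hpos : ∀ x ∈ J, 0 < deriv φ x / deriv φ 0) (hlam : |deriv φ 0| < 1) (hK : IsCompact K)
    (hKJ : K ⊆ J) {n : ℕ} (hn : MapsTo φ^[n] J K) : HasC1Linearization φ (deriv φ 0) J := by
  obtain ⟨u, hu, hupos, hueq⟩ := hJ.exists_pos_linearizing_density
    (hφ.continuousOn_deriv_of_isOpen hJ.isOpen le_rfl) hφ'' hpos hlam
  obtain ⟨h, h0, hh⟩ := exists_hasDerivAt_of_continuousOn hJ.isOpen hconn hJ.zero_mem hu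
  have hlam0 : deriv φ 0 ≠ 0 := fun h0 => by simpa [h0] using hpos 0 hJ.zero_mem
  have hhC1 : ContDiffOn ℝ 1 h J := contDiffOn_one_of_hasDerivAt hJ.isOpen hh hu
  have hh' : ∀ x ∈ J, 0 < deriv h x := fun x hx => (hh x hx).deriv ▸ hupos x
  have hmono : StrictMonoOn h J := strictMonoOn_of_deriv_pos hconn.convex hhC1.continuousOn
    fun x hx => hh' x (interior_subset hx)
  have hconj : ∀ x ∈ J, h (φ x) = deriv φ 0 * h x := hJ.conj_mul_of_hasDerivAt hconn
    (fun x hx => (hφ.differentiableOn one_ne_zero).differentiableAt (hJ.isOpen.mem_nhds hx))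
    hh h0 hueq
  have hbdd := isBounded_image_of_conj_mul hJ.mapsTo hlam0 hconj hhC1.continuousOn hK hKJ hn
  have himage : h '' J = Ioo (sInf (h '' J)) (sSup (h '' J)) :=
    eq_Ioo_csInf_csSup_of_isOpen_of_isConnected
      (isOpen_image_of_deriv_ne_zero hJ.isOpen hhC1 fun x hx => (hh' x hx).ne')
      (IsConnected.image ⟨⟨0, hJ.zero_mem⟩, hconn.isPreconnected⟩ h hhC1.continuousOn)
      hbdd.bddBelow hbdd.bddAbove
  have hzero : (0 : ℝ) ∈ Ioo (sInf (h '' J)) (sSup (h '' J)) :=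
    himage ▸ ⟨0, hJ.zero_mem, h0⟩
  exact ⟨_, _, hzero.1, hzero.2, h, hmono,
    himage ▸ isDiffeoOn_image hJ.isOpen hmono.injOn hhC1 fun x hx => (hh' x hx).ne',
    fun x hx _ => hconj x hx⟩

end IsBasinOfZero

end Linearization

/-- `φ` is a continuous strictly decreasing map of `[c, b]` into itself that fixes `0`, whose second
iterate sends `[c, b]` into the interior and has no other fixed point there. -/
structure IsAttractingFlip (φ : ℝ → ℝ) (c b : ℝ) : Prop where
  zero_mem : (0 : ℝ) ∈ Ioo c b
  map_zero : φ 0 = 0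
  mapsTo : MapsTo φ (Icc c b) (Icc c b)
  continuousOn : ContinuousOn φ (Icc c b)
  strictAntiOn : StrictAntiOn φ (Icc c b)
  mapsTo_iterate_two : MapsTo φ^[2] (Icc c b) (Ioo c b)
  eq_zero_of_periodic : ∀ x ∈ Ioo c b, φ (φ x) = x → x = 0

namespace IsAttractingFlip

variable {φ : ℝ → ℝ} {c b : ℝ}

theorem mapsTo_Ioo (hφ : IsAttractingFlip φ c b) : MapsTo φ (Ioo c b) (Ioo c b) := by
  intro x hx
  have hcb : c ≤ b := (hx.1.trans hx.2).le
  have hxmem : x ∈ Icc c b := Ioo_subset_Icc_self hx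
  exact ⟨(hφ.mapsTo (right_mem_Icc.2 hcb)).1.trans_lt
      (hφ.strictAntiOn hxmem (right_mem_Icc.2 hcb) hx.2),
    (hφ.strictAntiOn (left_mem_Icc.2 hcb) hxmem hx.1).trans_le
      (hφ.mapsTo (left_mem_Icc.2 hcb)).2⟩

theorem isBasinOfZero (hφ : IsAttractingFlip φ c b) : IsBasinOfZero φ (Ioo c b) where
  isOpen := isOpen_Ioo
  zero_mem := hφ.zero_mem
  mapsTo := hφ.mapsTo_Ioo
  continuousOn := hφ.continuousOn.mono Ioo_subset_Icc_self
  tendsto_iterate x hx := by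
    refine tendsto_iterate_of_tendsto_iterate_two
      (hφ.continuousOn.continuousAt (Icc_mem_nhds hφ.zero_mem.1 hφ.zero_mem.2)) hφ.map_zero ?_
    refine tendsto_iterate_of_monotoneOn_Icc (p := c) (q := b)
      (fun y hy z hz hyz => ?_) (hφ.continuousOn.iterate hφ.mapsTo 2) (hφ.mapsTo.iterate 2)
      (fun y hy hyy => ?_) (Ioo_subset_Icc_self hx)
    · exact hφ.strictAntiOn.antitoneOn (hφ.mapsTo hz) (hφ.mapsTo hy)
        (hφ.strictAntiOn.antitoneOn hy hz hyz)
    · exact hφ.eq_zero_of_periodic y (hyy ▸ hφ.mapsTo_iterate_two hy) hyy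

theorem abs_deriv_lt_one (hφ : IsAttractingFlip φ c b) (hneg : deriv φ 0 < 0)
    (hne : deriv φ 0 ≠ -1) : |deriv φ 0| < 1 := by
  obtain ⟨x, hx0, hxb⟩ := exists_between hφ.zero_mem.2
  have hx : x ∈ Ioo c b := ⟨hφ.zero_mem.1.trans hx0, hxb⟩
  have hnonzero : ∀ n, φ^[n] x ≠ 0 := by
    intro n
    induction n with
    | zero => exact hx0.ne'
    | succ n ih =>
      rw [iterate_succ_apply']
      intro hzero
      exact ih (hφ.strictAntiOn.injOn (hφ.mapsTo.iterate n (Ioo_subset_Icc_self hx))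
        (Ioo_subset_Icc_self hφ.zero_mem) (hzero.trans hφ.map_zero.symm))
  have hle : |deriv φ 0| ≤ 1 := norm_le_one_of_tendsto_iterate
    (differentiableAt_of_deriv_ne_zero hneg.ne).hasDerivAt hφ.map_zero hnonzero
    (hφ.isBasinOfZero.tendsto_iterate x hx)
  refine hle.lt_of_ne fun heq => hne ?_
  rw [abs_of_neg hneg] at heq
  linarith

theorem hasC1Linearization (hφ : IsAttractingFlip φ c b) (hC1 : ContDiffOn ℝ 1 φ (Ioo c b))
    (hneg : ∀ x ∈ Ioo c b, deriv φ x < 0) (hφ'' : DifferentiableAt ℝ (deriv φ) 0)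
    (hne : deriv φ 0 ≠ -1) : HasC1Linearization φ (deriv φ 0) (Ioo c b) :=
  hφ.isBasinOfZero.hasC1Linearization ordConnected_Ioo hC1 hφ''
    (fun x hx => div_pos_of_neg_of_neg (hneg x hx) (hneg 0 hφ.zero_mem))
    (hφ.abs_deriv_lt_one (hneg 0 hφ.zero_mem) hne)
    (isCompact_Icc.image_of_continuousOn (hφ.continuousOn.iterate hφ.mapsTo 2))
    hφ.mapsTo_iterate_two.image_subset
    fun _ hx => mem_image_of_mem _ (Ioo_subset_Icc_self hx)

end IsAttractingFlip

section DecreasingMaps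

variable {f g : ℝ → ℝ} {c b : ℝ}

theorem isAttractingFlip_of_lt_map (h0 : (0 : ℝ) ∈ Ioo c b) (hf0 : f 0 = 0)
    (hcont : ContinuousOn f (Icc c b)) (hanti : StrictAntiOn f (Icc c b))
    (hper : ∀ x ∈ Ioo c b, f (f x) = x → x = 0) (hfc : f c = b) (hfb : c < f b) :
    IsAttractingFlip f c b := by
  have hcb : c ≤ b := (h0.1.trans h0.2).le
  have hc : c ∈ Icc c b := left_mem_Icc.2 hcb
  have hb : b ∈ Icc c b := right_mem_Icc.2 hcb
  have hrange : ∀ x ∈ Icc c b, f x ∈ Icc (f b) b := fun x hx =>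
    ⟨hanti.antitoneOn hx hb hx.2, hfc ▸ hanti.antitoneOn hc hx hx.1⟩
  have hmaps : MapsTo f (Icc c b) (Icc c b) := fun x hx =>
    ⟨hfb.le.trans (hrange x hx).1, (hrange x hx).2⟩
  refine ⟨h0, hf0, hmaps, hcont, hanti, fun x hx => ⟨?_, ?_⟩, hper⟩
  · exact hfb.trans_le (hrange _ (hmaps hx)).1
  · exact (hanti hc (hmaps hx) (hfb.trans_le (hrange x hx).1)).trans_eq hfc

theorem surjOn_Icc_of_map_le (hcb : c ≤ b) (hcont : ContinuousOn f (Icc c b)) (hfc : f c = b)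
    (hfb : f b ≤ c) : SurjOn f (Icc c b) (Icc c b) :=
  (Icc_subset_Icc hfb hfc.ge).trans (intermediate_value_Icc' hcb hcont)

theorem isAttractingFlip_of_leftInvOn_of_map_lt (h0 : (0 : ℝ) ∈ Ioo c b) (hf0 : f 0 = 0)
    (hcont : ContinuousOn f (Icc c b)) (hanti : StrictAntiOn f (Icc c b))
    (hper : ∀ x ∈ Ioo c b, f (f x) = x → x = 0) (hfc : f c = b) (hfb : f b < c)
    (hgf : LeftInvOn g f (Icc c b)) : IsAttractingFlip g c b := by
  have hsurj : SurjOn f (Icc c b) (Icc c b) :=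
    surjOn_Icc_of_map_le (h0.1.trans h0.2).le hcont hfc hfb.le
  have hmaps : MapsTo g (Icc c b) (Icc c b) := hgf.mapsTo hsurj
  have hfg : RightInvOn g f (Icc c b) := hgf.rightInvOn_image.mono hsurj
  refine ⟨h0, ?_, hmaps, ?_, fun x hx y hy hxy => ?_, fun y hy => ?_, fun y hy hyy => ?_⟩
  · simpa only [hf0] using hgf (Ioo_subset_Icc_self h0)
  · exact (continuousOn_image_of_leftInvOn_of_isCompact isCompact_Icc hcont hgf).mono hsurj
  · rwa [← hanti.lt_iff_gt (hmaps hx) (hmaps hy), hfg hx, hfg hy]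
  · have hgg : g (g y) ∈ Icc c b := hmaps (hmaps hy)
    refine ⟨hgg.1.lt_of_ne fun heq => ?_, hgg.2.lt_of_ne fun heq => ?_⟩
    · have hgy : g y = b := by rw [← hfg (hmaps hy), ← heq, hfc]
      exact hfb.not_ge (hgy ▸ (hfg hy).symm ▸ hy.1)
    · exact hfb.not_ge (heq ▸ (hfg (hmaps hy)).symm ▸ (hmaps hy).1)
  · have hgy : g y = f y := by rw [← hfg (hmaps (Ioo_subset_Icc_self hy)), hyy]
    exact hper y hy (by rw [← hgy, hfg (Ioo_subset_Icc_self hy)])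

theorem hasC1Linearization_of_leftInvOn (hg : IsAttractingFlip g c b)
    (hgf : LeftInvOn g f (Ioo c b)) (hfg : RightInvOn g f (Ioo c b))
    (hC1 : ContDiffOn ℝ 1 f (Ioo c b)) (hneg : ∀ x ∈ Ioo c b, deriv f x < 0)
    (hf'' : DifferentiableAt ℝ (deriv f) 0) (hne : deriv f 0 ≠ -1) :
    HasC1Linearization f (deriv f 0) (Ioo c b) := by
  have hinv : ∀ x ∈ Ioo c b, ∀ᶠ y in 𝓝 x, g (f y) = y := fun x hx => by
    filter_upwards [isOpen_Ioo.mem_nhds hx] with y hy using hgf hy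
  have hf : ∀ x ∈ Ioo c b, ContDiffAt ℝ 1 f x := fun x hx =>
    hC1.contDiffAt (isOpen_Ioo.mem_nhds hx)
  have hderiv : ∀ y ∈ Ioo c b, deriv g y = (deriv f (g y))⁻¹ := fun y hy => by
    have hgy := hg.mapsTo_Ioo hy
    simpa only [hfg hy] using
      deriv_of_eventually_leftInverse (hf _ hgy) (hneg _ hgy).ne (hinv _ hgy)
  have hgC1 : ContDiffOn ℝ 1 g (Ioo c b) := fun y hy => by
    have hgy := hg.mapsTo_Ioo hy
    simpa only [hfg hy] using (contDiffAt_of_eventually_leftInverse one_ne_zero (hf _ hgy)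
      (hneg _ hgy).ne (hinv _ hgy)).contDiffWithinAt (s := Ioo c b)
  have hderiv0 : deriv g 0 = (deriv f 0)⁻¹ := by rw [hderiv 0 hg.zero_mem, hg.map_zero]
  have hg'' : DifferentiableAt ℝ (deriv g) 0 := by
    have hg0 : DifferentiableAt ℝ g 0 := differentiableAt_of_deriv_ne_zero
      (hderiv0 ▸ inv_ne_zero (hneg 0 hg.zero_mem).ne)
    have hcomp : DifferentiableAt ℝ (fun y => deriv f (g y)) 0 :=
      DifferentiableAt.fun_comp' 0 (by rwa [hg.map_zero]) hg0
    refine (hcomp.fun_inv (hneg _ (hg.mapsTo_Ioo hg.zero_mem)).ne).congr_of_eventuallyEq ?_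
    filter_upwards [isOpen_Ioo.mem_nhds hg.zero_mem] with y hy using hderiv y hy
  refine HasC1Linearization.of_leftInvOn (g := g) ?_ (hneg 0 hg.zero_mem).ne hgf
  rw [← hderiv0]
  refine hg.hasC1Linearization hgC1 (fun y hy => ?_) hg'' fun heq => hne ?_
  · rw [hderiv y hy]
    exact inv_lt_zero.2 (hneg _ (hg.mapsTo_Ioo hy))
  · rw [← inv_inv (deriv f 0), ← hderiv0, heq, inv_neg_one]

end DecreasingMaps

theorem stmt5_general (c b : ℝ) (f : ℝ → ℝ) (hc : c < 0) (hb : 0 < b)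
    (hcont : ContinuousOn f (Icc c b)) (hC1 : ContDiffOn ℝ 1 f (Ioo c b))
    (hf'' : DifferentiableAt ℝ (deriv f) 0) (hneg : ∀ x ∈ Ioo c b, deriv f x < 0)
    (hfix : f 0 = 0) (hne : deriv f 0 ≠ -1) (hper : ∀ x ∈ Ico c b, f (f x) = x → x = 0)
    (hfc : f c = b) : HasC1Linearization f (deriv f 0) (Ioo c b) := by
  have hanti : StrictAntiOn f (Icc c b) :=
    strictAntiOn_of_deriv_neg (convex_Icc c b) hcont (by rwa [interior_Icc])
  have hper' : ∀ x ∈ Ioo c b, f (f x) = x → x = 0 := fun x hx => hper x (Ioo_subset_Ico_self hx)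
  rcases lt_trichotomy (f b) c with hrepel | hswap | hattract
  · have hinv : InvOn (invFunOn f (Icc c b)) f (Icc c b) (f '' Icc c b) :=
      hanti.injOn.bijOn_image.invOn_invFunOn
    have hsurj := surjOn_Icc_of_map_le (hc.trans hb).le hcont hfc hrepel.le
    exact hasC1Linearization_of_leftInvOn
      (isAttractingFlip_of_leftInvOn_of_map_lt ⟨hc, hb⟩ hfix hcont hanti hper' hfc hrepel hinv.1)
      (hinv.1.mono Ioo_subset_Icc_self) (hinv.2.mono (Ioo_subset_Icc_self.trans hsurj))
      hC1 hneg hf'' hne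
  · exact absurd (hper c ⟨le_rfl, hc.trans hb⟩ (by rw [hfc, hswap])) hc.ne
  · have hflip := isAttractingFlip_of_lt_map ⟨hc, hb⟩ hfix hcont hanti hper' hfc hattract
    exact hflip.hasC1Linearization hC1 hneg hf'' hne

/-- Global linearisation, decreasing case (Lemma 4.3).
`c₀` is the unique point of `(a,b)` mapped to `b` by `f`, i.e. `f⁻¹(b)`. -/
theorem stmt5 (a b lam c₀ : ℝ) (f : ℝ → ℝ)
    (ha : a < 0) (hb : 0 < b)
    (hf : ContDiffOn ℝ 2 f (Set.Icc a b))
    (hfd : ∀ x ∈ Set.Ioo a b, deriv f x < 0)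
    (hfix : f 0 = 0)
    (hlam : deriv f 0 = lam) (hlam1 : lam ≠ -1)
    (hper2 : ∀ x ∈ Set.Ioo a b, f (f x) = x → x = 0)
    (hbfa : b < f a)
    (hc₀ : c₀ ∈ Set.Ioo a b) (hfc₀ : f c₀ = b) :
    ∃ c d : ℝ, c < 0 ∧ 0 < d ∧
      ∃ h : ℝ → ℝ, StrictMonoOn h (Set.Ioo c₀ b) ∧
        IsDiffeoOn h (Set.Ioo c₀ b) (Set.Ioo c d) ∧
        ConjRelOn h f (fun y => lam * y) (Set.Ioo c₀ b) := by
  have hanti : StrictAntiOn f (Set.Icc a b) :=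
    strictAntiOn_of_deriv_neg (convex_Icc a b) hf.continuousOn (by rwa [interior_Icc])
  have hc₀neg : c₀ < 0 := (hanti.lt_iff_gt ⟨ha.le, hb.le⟩ (Ioo_subset_Icc_self hc₀)).1
    (by rwa [hfix, hfc₀])
  have hf'' : DifferentiableAt ℝ (deriv f) 0 :=
    (((hf.mono Ioo_subset_Icc_self).deriv_of_isOpen isOpen_Ioo one_add_one_eq_two.le).contDiffAt
      (Ioo_mem_nhds ha hb)).differentiableAt one_ne_zero
  have hsub : Ioo c₀ b ⊆ Ioo a b := Ioo_subset_Ioo_left hc₀.1.le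
  subst hlam
  exact stmt5_general c₀ b f hc₀neg hb (hf.continuousOn.mono (Icc_subset_Icc_left hc₀.1.le))
    ((hf.mono (hsub.trans Ioo_subset_Icc_self)).of_le one_le_two) hf''
    (fun x hx => hfd x (hsub hx)) hfix hlam1
    (fun x hx => hper2 x ⟨hc₀.1.trans_le hx.1, hx.2⟩) hfc₀
end

section
/- Let f : (a,b) → ℝ be C² with f′ > 0 on (a,b), unique fixed point x* ∈ (a,b), and f′(x*) = λ ∈ (0,1). Let g : (−∞,d) → ℝ be C² with g′ > 0, unique fixed point y* < d, g′(y*) = λ, and g(y) → −∞ as y → −∞. Let c < y* and let h : (a,b) → (c,d) be an increasing C¹ diffeomorphism with h(f(x)) = g(h(x)) whenever x, f(x) ∈ (a,b) (so h(x*) = y*). Let K > 0 satisfy |f″(x)| ≤ K for all x ∈ (a,b) and |g″(y)| ≤ K for all y ∈ (c,d). Set r = λ(1−λ)/(10K) and suppose max(x* − a, b − x*) ≤ r. Set χ = (d − y*)/(b − x*) and suppose χ ≤ 3/2. Then for all x ∈ (a,b) with x ≠ x*, |(h(x) − y*)/(x − x*) − χ| < (3/(2r)) · (4|x − x*| + b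 − x*). -/
/-!
Write `x₀` and `y₀` for the fixed points and `q x` for the slope of `h` between `x₀` and `x`. The
chain rule for slopes gives `q (f x) / q x = slope g y₀ (h x) / slope f x₀ x`, and by Taylor's
theorem both slopes on the right are within `K / 2` times the distance to the fixed point of the
common multiplier `λ`. Distances to the fixed points contract geometrically along orbits, so
summing the increments of `log q` along the orbit of `x`, on which `q` tends to `h' x₀`, bounds
`|log (q x) - log (h' x₀)|` by a multiple of `|x - x₀| + |h x - y₀|`, as long as
`|h x - y₀| ≤ 3 r`. Letting `x → b` turns `χ ≤ 3 / 2` into `h' x₀ ≤ 2`, which gives `q x < 3`, hence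
`|h x - y₀| < 3 r`, wherever the estimate applies; as the range of `h` is an interval, it then
applies everywhere. Thus both `q x` and `χ`, the limit of `q` at `b`, are close to `h' x₀`.
-/

open Set Filter Topology Real

section Slope

theorem slope_comp {k : Type*} [Field k] (g f : k → k) (x y : k) :
    slope (g ∘ f) x y = slope g (f x) (f y) * slope f x y := by
  simp only [slope_def_field, Function.comp_apply]
  by_cases hfxy : f y - f x = 0
  · simp [sub_eq_zero.1 hfxy]
  · rw [div_mul_div_cancel₀ hfxy]

theorem abs_slope_mul_abs_sub (f : ℝ → ℝ) (x y : ℝ) :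
    |slope f x y| * |y - x| = |f y - f x| := by
  rw [← abs_mul, mul_comm, ← smul_eq_mul, sub_smul_slope, vsub_eq_sub]

theorem abs_slope_sub_deriv_le {f : ℝ → ℝ} {s : Set ℝ} {x₀ x K : ℝ} (hs : IsOpen s)
    (hs' : s.OrdConnected) (hf : ContDiffOn ℝ 2 f s) (hK : ∀ y ∈ s, |deriv (deriv f) y| ≤ K)
    (hx₀ : x₀ ∈ s) (hx : x ∈ s) (hne : x ≠ x₀) :
    |slope f x₀ x - deriv f x₀| ≤ K / 2 * |x - x₀| := by
  have hsub : uIcc x₀ x ⊆ s := hs'.uIcc_subset hx₀ hx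
  have hderiv : derivWithin f (uIcc x₀ x) x₀ = deriv f x₀ :=
    ((hf.differentiableOn two_ne_zero).differentiableAt (hs.mem_nhds hx₀)).derivWithin
      (uniqueDiffOn_uIcc hne.symm x₀ left_mem_uIcc)
  obtain ⟨ξ, hξ, htaylor⟩ := taylor_mean_remainder_lagrange_iteratedDeriv (n := 1) hne.symm
    (by simpa [one_add_one_eq_two] using hf.mono hsub)
  have hslope : slope f x₀ x - deriv f x₀ = deriv (deriv f) ξ / 2 * (x - x₀) := by
    have hremainder : f x - (f x₀ + deriv f x₀ * (x - x₀)) =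
        deriv (deriv f) ξ * (x - x₀) ^ 2 / 2 := by
      simpa [taylorWithinEval_succ, iteratedDerivWithin_one, hderiv, iteratedDeriv_succ, mul_comm]
        using htaylor
    have hxx₀ : x - x₀ ≠ 0 := sub_ne_zero.2 hne
    rw [slope_def_field]
    field_simp
    linarith
  rw [hslope, abs_mul, abs_div, abs_two]
  gcongr
  exact hK ξ (hsub (Ioo_subset_Icc_self hξ))

end Slope

section Log

theorem abs_log_sub_log_le {m p q : ℝ} (hm : 0 < m) (hp : m ≤ p) (hq : m ≤ q) :
    |log p - log q| ≤ |p - q| / m := by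
  wlog hpq : q ≤ p generalizing p q
  · rw [abs_sub_comm, abs_sub_comm p]
    exact this hq hp (le_of_not_ge hpq)
  have hq₀ : 0 < q := hm.trans_le hq
  have hp₀ : 0 < p := hm.trans_le hp
  rw [abs_of_nonneg (sub_nonneg.2 (log_le_log hq₀ hpq)), abs_of_nonneg (sub_nonneg.2 hpq)]
  calc log p - log q = log (p / q) := (log_div hp₀.ne' hq₀.ne').symm
    _ ≤ p / q - 1 := log_le_sub_one_of_pos (div_pos hp₀ hq₀)
    _ = (p - q) / q := by field_simp
    _ ≤ (p - q) / m := div_le_div_of_nonneg_left (sub_nonneg.2 hpq) hm hq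

theorem one_sub_mul_le_of_abs_log_sub_log_le {p q δ : ℝ} (hp : 0 < p) (hq : 0 < q)
    (h : |log p - log q| ≤ δ) : (1 - δ) * p ≤ q := by
  have hlog : 1 - q / p ≤ log p - log q := by
    rw [← log_div hp.ne' hq.ne', ← inv_div]
    exact one_sub_inv_le_log_of_pos (div_pos hp hq)
  rw [← le_div_iff₀ hp]
  linarith [le_abs_self (log p - log q)]

end Log

/-- The fixed point `x₀` of `f` attracts `s` with multiplier `lam`: the slopes of `f` between `x₀`
and the points `x` of `s` differ from `lam` by at most `C * |x - x₀|`, which never exceeds the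
fraction `ε < 1` of `lam * (1 - lam)`. The latter keeps these slopes away from `0` and `1`
by an amount proportional to the distance of `lam` from these two values. -/
structure IsAttractingOn (f : ℝ → ℝ) (x₀ lam C ε : ℝ) (s : Set ℝ) : Prop where
  map_eq : f x₀ = x₀
  abs_slope_sub_le : ∀ x ∈ s, x ≠ x₀ → |slope f x₀ x - lam| ≤ C * |x - x₀|
  mul_abs_sub_le : ∀ x ∈ s, C * |x - x₀| ≤ ε * (lam * (1 - lam))
  multiplier_pos : 0 < lam
  multiplier_lt_one : lam < 1
  fraction_nonneg : 0 ≤ ε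
  fraction_lt_one : ε < 1

namespace IsAttractingOn

variable {f : ℝ → ℝ} {x₀ lam C ε x : ℝ} {s : Set ℝ}

/-- The factor by which each step of `f` reduces the distance to `x₀`. -/
def rate (lam ε : ℝ) : ℝ := 1 - (1 - ε) * (1 - lam)

theorem rate_pos (hf : IsAttractingOn f x₀ lam C ε s) : 0 < rate lam ε := by
  unfold rate
  nlinarith [hf.multiplier_pos, hf.multiplier_lt_one, hf.fraction_nonneg, hf.fraction_lt_one]

theorem rate_lt_one (hf : IsAttractingOn f x₀ lam C ε s) : rate lam ε < 1 :=
  sub_lt_self _ (mul_pos (sub_pos.2 hf.fraction_lt_one) (sub_pos.2 hf.multiplier_lt_one))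

theorem mul_multiplier_pos (hf : IsAttractingOn f x₀ lam C ε s) : 0 < (1 - ε) * lam :=
  mul_pos (sub_pos.2 hf.fraction_lt_one) hf.multiplier_pos

theorem mul_multiplier_le_slope (hf : IsAttractingOn f x₀ lam C ε s) (hx : x ∈ s) (hne : x ≠ x₀) :
    (1 - ε) * lam ≤ slope f x₀ x := by
  have hlower := (abs_le.1 ((hf.abs_slope_sub_le x hx hne).trans (hf.mul_abs_sub_le x hx))).1
  nlinarith [mul_nonneg hf.fraction_nonneg (sq_nonneg lam)]

theorem slope_pos (hf : IsAttractingOn f x₀ lam C ε s) (hx : x ∈ s) (hne : x ≠ x₀) :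
    0 < slope f x₀ x :=
  hf.mul_multiplier_pos.trans_le (hf.mul_multiplier_le_slope hx hne)

theorem slope_le_rate (hf : IsAttractingOn f x₀ lam C ε s) (hx : x ∈ s) (hne : x ≠ x₀) :
    slope f x₀ x ≤ rate lam ε := by
  have hupper := (abs_le.1 ((hf.abs_slope_sub_le x hx hne).trans (hf.mul_abs_sub_le x hx))).2
  unfold rate
  nlinarith [mul_nonneg hf.fraction_nonneg (sq_nonneg (1 - lam))]

theorem abs_map_sub_le (hf : IsAttractingOn f x₀ lam C ε s) (hx : x ∈ s) :
    |f x - x₀| ≤ rate lam ε * |x - x₀| := by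
  rcases eq_or_ne x x₀ with rfl | hne
  · simp [hf.map_eq]
  · calc |f x - x₀| = |slope f x₀ x| * |x - x₀| := by rw [abs_slope_mul_abs_sub, hf.map_eq]
      _ = slope f x₀ x * |x - x₀| := by rw [abs_of_pos (hf.slope_pos hx hne)]
      _ ≤ rate lam ε * |x - x₀| := by gcongr; exact hf.slope_le_rate hx hne

theorem mapsTo (hf : IsAttractingOn f x₀ lam C ε s) (hs : s.OrdConnected) (hx₀ : x₀ ∈ s) :
    MapsTo f (s \ {x₀}) (s \ {x₀}) := by
  rintro x ⟨hx, hne⟩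
  have hpos := hf.slope_pos hx hne
  have hle := (hf.slope_le_rate hx hne).trans hf.rate_lt_one.le
  have hfx : f x = x₀ + slope f x₀ x • (x - x₀) := by
    simpa [hf.map_eq, mul_comm, add_comm] using (sub_smul_slope_vadd f x₀ x).symm
  refine ⟨?_, fun hfx₀ ↦ hpos.ne' (slope_eq_zero_iff.2 (hf.map_eq.trans hfx₀.symm))⟩
  rw [hfx]
  exact hs.convex.add_smul_sub_mem hx₀ hx ⟨hpos.le, hle⟩

theorem tendsto_iterate (hf : IsAttractingOn f x₀ lam C ε s) (hs : s.OrdConnected) (hx₀ : x₀ ∈ s)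
    (hx : x ∈ s \ {x₀}) : Tendsto (fun n ↦ f^[n] x) atTop (𝓝[≠] x₀) := by
  have horbit (n : ℕ) : f^[n] x ∈ s \ {x₀} := (hf.mapsTo hs hx₀).iterate n hx
  have hdist (n : ℕ) : dist (f^[n] x) x₀ ≤ rate lam ε ^ n * |x - x₀| := by
    refine le_geom (u := fun n ↦ |f^[n] x - x₀|) hf.rate_pos.le n fun k _ ↦ ?_
    rw [Function.iterate_succ_apply']
    exact hf.abs_map_sub_le (horbit k).1
  refine tendsto_nhdsWithin_iff.2
    ⟨tendsto_iff_dist_tendsto_zero.2 ?_, Eventually.of_forall fun n ↦ (horbit n).2⟩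
  refine squeeze_zero (fun _ ↦ dist_nonneg) hdist ?_
  simpa using (tendsto_pow_atTop_nhds_zero_of_lt_one hf.rate_pos.le hf.rate_lt_one).mul_const _

end IsAttractingOn

section Conjugacy

variable {f g h : ℝ → ℝ} {x₀ lam C ε σ x : ℝ} {s t : Set ℝ}

theorem slope_map_mul_slope_of_conj (hf : f x₀ = x₀) (hg : g (h x₀) = h x₀)
    (hconj : h (f x) = g (h x)) :
    slope h x₀ (f x) * slope f x₀ x = slope g (h x₀) (h x) * slope h x₀ x :=
  calc slope h x₀ (f x) * slope f x₀ x = slope (h ∘ f) x₀ x := by rw [slope_comp, hf]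
    _ = slope (g ∘ h) x₀ x := by simp only [slope_def_field, Function.comp_apply, hconj, hf, hg]
    _ = slope g (h x₀) (h x) * slope h x₀ x := slope_comp g h x₀ x

theorem abs_log_slope_sub_log_slope_map_le (hf : IsAttractingOn f x₀ lam C ε s)
    (hg : IsAttractingOn g (h x₀) lam C ε t) (hst : MapsTo h s t) (hmono : StrictMonoOn h s)
    (hx₀ : x₀ ∈ s) (hx : x ∈ s \ {x₀}) (hfx : f x ∈ s \ {x₀}) (hconj : h (f x) = g (h x)) :
    |log (slope h x₀ x) - log (slope h x₀ (f x))| ≤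
      C / ((1 - ε) * lam) * (|x - x₀| + |h x - h x₀|) := by
  obtain ⟨hxs, hne⟩ := hx
  have hhx : h x ∈ t := hst hxs
  have hhne : h x ≠ h x₀ := hmono.injOn.ne hxs hx₀ hne
  have hlog : log (slope h x₀ x) - log (slope h x₀ (f x)) =
      log (slope f x₀ x) - log (slope g (h x₀) (h x)) := by
    have hmul := congrArg log (slope_map_mul_slope_of_conj hf.map_eq hg.map_eq hconj)
    rw [log_mul (hmono.slope_pos hx₀ hfx.1 (Ne.symm hfx.2)).ne' (hf.slope_pos hxs hne).ne',
      log_mul (hg.slope_pos hhx hhne).ne' (hmono.slope_pos hx₀ hxs (Ne.symm hne)).ne'] at hmul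
    linarith
  have hdiff : |slope f x₀ x - slope g (h x₀) (h x)| ≤ C * (|x - x₀| + |h x - h x₀|) := by
    have htriangle := abs_sub_le (slope f x₀ x) lam (slope g (h x₀) (h x))
    rw [abs_sub_comm lam] at htriangle
    linarith [hf.abs_slope_sub_le x hxs hne, hg.abs_slope_sub_le (h x) hhx hhne]
  calc |log (slope h x₀ x) - log (slope h x₀ (f x))|
      ≤ |slope f x₀ x - slope g (h x₀) (h x)| / ((1 - ε) * lam) := hlog ▸ abs_log_sub_log_le
        hf.mul_multiplier_pos (hf.mul_multiplier_le_slope hxs hne)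
        (hg.mul_multiplier_le_slope hhx hhne)
    _ ≤ C * (|x - x₀| + |h x - h x₀|) / ((1 - ε) * lam) := by
      gcongr
      exact hf.mul_multiplier_pos.le
    _ = C / ((1 - ε) * lam) * (|x - x₀| + |h x - h x₀|) := by ring

theorem abs_log_slope_sub_log_deriv_le (hf : IsAttractingOn f x₀ lam C ε s)
    (hg : IsAttractingOn g (h x₀) lam C ε t) (hC : 0 ≤ C) (hst : MapsTo h s t)
    (hmono : StrictMonoOn h s) (hconj : ConjRelOn h f g s) (hs : s.OrdConnected) (hx₀ : x₀ ∈ s)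
    (hderiv : HasDerivAt h σ x₀) (hσ : σ ≠ 0) (hx : x ∈ s \ {x₀}) :
    |log (slope h x₀ x) - log σ| ≤
      C / ((1 - ε) ^ 2 * (lam * (1 - lam))) * (|x - x₀| + |h x - h x₀|) := by
  have hmaps : MapsTo f (s \ {x₀}) (s \ {x₀}) := hf.mapsTo hs hx₀
  have horbit (n : ℕ) : f^[n] x ∈ s \ {x₀} := hmaps.iterate n hx
  have hsize (n : ℕ) : |f^[n] x - x₀| + |h (f^[n] x) - h x₀| ≤
      IsAttractingOn.rate lam ε ^ n * (|x - x₀| + |h x - h x₀|) := by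
    refine le_geom (u := fun n ↦ |f^[n] x - x₀| + |h (f^[n] x) - h x₀|) hf.rate_pos.le n
      fun k _ ↦ ?_
    obtain ⟨hk, -⟩ := horbit k
    rw [Function.iterate_succ_apply', hconj _ hk (hmaps (horbit k)).1, mul_add]
    exact add_le_add (hf.abs_map_sub_le hk) (hg.abs_map_sub_le (hst hk))
  have hstep (n : ℕ) : dist (log (slope h x₀ (f^[n] x))) (log (slope h x₀ (f^[n + 1] x))) ≤
      C / ((1 - ε) * lam) * (|x - x₀| + |h x - h x₀|) * IsAttractingOn.rate lam ε ^ n := by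
    have hfn := hmaps (horbit n)
    rw [Function.iterate_succ_apply', mul_assoc, mul_comm (|x - x₀| + _)]
    refine (abs_log_slope_sub_log_slope_map_le hf hg hst hmono hx₀ (horbit n) hfn
      (hconj _ (horbit n).1 hfn.1)).trans ?_
    exact mul_le_mul_of_nonneg_left (hsize n) (div_nonneg hC hf.mul_multiplier_pos.le)
  have hlim : Tendsto (fun n ↦ log (slope h x₀ (f^[n] x))) atTop (𝓝 (log σ)) :=
    (hderiv.tendsto_slope.comp (hf.tendsto_iterate hs hx₀ hx)).log hσ
  calc |log (slope h x₀ x) - log σ|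
      ≤ C / ((1 - ε) * lam) * (|x - x₀| + |h x - h x₀|) / (1 - IsAttractingOn.rate lam ε) :=
        dist_le_of_le_geometric_of_tendsto₀ _ _ hf.rate_lt_one hstep hlim
    _ = C / ((1 - ε) ^ 2 * (lam * (1 - lam))) * (|x - x₀| + |h x - h x₀|) := by
        rw [IsAttractingOn.rate, sub_sub_cancel, mul_div_right_comm, div_div]
        ring

end Conjugacy

/-- Distortion control for an increasing map `h` near `x₀`, with `σ` standing for the derivative of
`h` at `x₀` and `r` for the size of the domain `s`: as long as `h x` is within `3 * r` of `h x₀`,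
the slope of `h` between `x₀` and `x` is logarithmically close to `σ`. -/
structure HasSlopeDistortionOn (h : ℝ → ℝ) (x₀ σ r : ℝ) (s : Set ℝ) : Prop where
  scale_pos : 0 < r
  deriv_pos : 0 < σ
  strictMonoOn : StrictMonoOn h s
  base_mem : x₀ ∈ s
  abs_sub_base_le : ∀ x ∈ s, |x - x₀| ≤ r
  ordConnected_image : (h '' s).OrdConnected
  abs_log_slope_sub_log_le : ∀ x ∈ s, x ≠ x₀ → |h x - h x₀| ≤ 3 * r →
    |log (slope h x₀ x) - log σ| ≤ 7 / 100 * ((|x - x₀| + |h x - h x₀|) / r)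

namespace HasSlopeDistortionOn

variable {h : ℝ → ℝ} {x₀ σ r χ b x M : ℝ} {s : Set ℝ}

theorem slope_pos (hh : HasSlopeDistortionOn h x₀ σ r s) (hx : x ∈ s) (hne : x ≠ x₀) :
    0 < slope h x₀ x :=
  hh.strictMonoOn.slope_pos hh.base_mem hx hne.symm

theorem abs_log_slope_sub_log_le_of_le (hh : HasSlopeDistortionOn h x₀ σ r s) (hx : x ∈ s)
    (hne : x ≠ x₀) (hM : M ≤ 3) (hhx : |h x - h x₀| ≤ M * r) :
    |log (slope h x₀ x) - log σ| ≤ 7 / 100 * (1 + M) := by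
  have hr := hh.scale_pos
  refine (hh.abs_log_slope_sub_log_le x hx hne (hhx.trans (by gcongr))).trans ?_
  gcongr
  rw [div_le_iff₀ hr]
  linarith [hh.abs_sub_base_le x hx]

theorem deriv_le_two (hh : HasSlopeDistortionOn h x₀ σ r s) (hx₀b : x₀ < b)
    (hbs : Ioo x₀ b ⊆ s) (hbound : ∀ x ∈ Ioo x₀ b, h x - h x₀ ≤ 3 / 2 * r)
    (hlim : Tendsto (slope h x₀) (𝓝[<] b) (𝓝 χ)) (hχ : χ ≤ 3 / 2) : σ ≤ 2 := by
  have hslope (x) (hx : x ∈ Ioo x₀ b) : 33 / 40 * σ ≤ slope h x₀ x := by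
    have hhx : |h x - h x₀| ≤ 3 / 2 * r := by
      rw [abs_of_pos (sub_pos.2 (hh.strictMonoOn hh.base_mem (hbs hx) hx.1))]
      exact hbound x hx
    have hlog := hh.abs_log_slope_sub_log_le_of_le (hbs hx) hx.1.ne' (by norm_num) hhx
    rw [abs_sub_comm] at hlog
    linarith [one_sub_mul_le_of_abs_log_sub_log_le hh.deriv_pos
      (hh.slope_pos (hbs hx) hx.1.ne') hlog]
  have hσχ : 33 / 40 * σ ≤ χ :=
    ge_of_tendsto hlim (mem_of_superset (Ioo_mem_nhdsLT hx₀b) hslope)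
  linarith

theorem slope_lt_three (hh : HasSlopeDistortionOn h x₀ σ r s) (hσ : σ ≤ 2) (hx : x ∈ s)
    (hne : x ≠ x₀) (hhx : |h x - h x₀| ≤ 3 * r) : slope h x₀ x < 3 := by
  linarith [one_sub_mul_le_of_abs_log_sub_log_le (hh.slope_pos hx hne) hh.deriv_pos
    (hh.abs_log_slope_sub_log_le_of_le hx hne le_rfl hhx)]

theorem abs_map_sub_ne_three_mul (hh : HasSlopeDistortionOn h x₀ σ r s) (hσ : σ ≤ 2)
    (hx : x ∈ s) : |h x - h x₀| ≠ 3 * r := by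
  intro heq
  have hr := hh.scale_pos
  rcases eq_or_ne x x₀ with rfl | hne
  · rw [sub_self, abs_zero] at heq
    linarith
  · have hlt : |h x - h x₀| < 3 * r :=
      calc |h x - h x₀| = slope h x₀ x * |x - x₀| := by
            rw [← abs_slope_mul_abs_sub, abs_of_pos (hh.slope_pos hx hne)]
        _ < 3 * |x - x₀| := mul_lt_mul_of_pos_right (hh.slope_lt_three hσ hx hne heq.le)
            (abs_pos.2 (sub_ne_zero.2 hne))
        _ ≤ 3 * r := by linarith [hh.abs_sub_base_le x hx]
    exact hlt.ne heq

theorem abs_map_sub_le_three_mul (hh : HasSlopeDistortionOn h x₀ σ r s) (hσ : σ ≤ 2)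
    (hx : x ∈ s) : |h x - h x₀| ≤ 3 * r := by
  have hr := hh.scale_pos
  have hx₀_image := mem_image_of_mem h hh.base_mem
  have hx_image := mem_image_of_mem h hx
  by_contra! hlarge
  rcases lt_abs.1 hlarge with hright | hleft
  · obtain ⟨z, hz, hhz⟩ : h x₀ + 3 * r ∈ h '' s :=
      hh.ordConnected_image.out hx₀_image hx_image ⟨by linarith, by linarith⟩
    refine hh.abs_map_sub_ne_three_mul hσ hz ?_
    rw [hhz, add_sub_cancel_left, abs_of_pos (by linarith)]
  · obtain ⟨z, hz, hhz⟩ : h x₀ - 3 * r ∈ h '' s :=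
      hh.ordConnected_image.out hx_image hx₀_image ⟨by linarith, by linarith⟩
    refine hh.abs_map_sub_ne_three_mul hσ hz ?_
    rw [hhz, sub_sub_cancel_left, abs_neg, abs_of_pos (by linarith)]

theorem abs_slope_sub_le (hh : HasSlopeDistortionOn h x₀ σ r s) (hσ : σ ≤ 2) (hx : x ∈ s)
    (hne : x ≠ x₀) : |slope h x₀ x - σ| ≤ |x - x₀| / r := by
  have hr := hh.scale_pos
  have hpos : 0 < slope h x₀ x := hh.slope_pos hx hne
  have hhx : |h x - h x₀| ≤ 3 * r := hh.abs_map_sub_le_three_mul hσ hx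
  have hlt : slope h x₀ x < 3 := hh.slope_lt_three hσ hx hne hhx
  have hsize : (|x - x₀| + |h x - h x₀|) / r ≤ 4 * (|x - x₀| / r) := by
    rw [← mul_div_assoc, ← abs_slope_mul_abs_sub h, abs_of_pos hpos]
    gcongr
    nlinarith [abs_nonneg (x - x₀)]
  have hlog : |log (slope h x₀ x) - log σ| ≤ 7 / 25 * (|x - x₀| / r) := by
    linarith [hh.abs_log_slope_sub_log_le x hx hne hhx]
  have hupper := one_sub_mul_le_of_abs_log_sub_log_le hpos hh.deriv_pos hlog
  rw [abs_sub_comm] at hlog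
  have hlower := one_sub_mul_le_of_abs_log_sub_log_le hh.deriv_pos hpos hlog
  have hnonneg : 0 ≤ |x - x₀| / r := by positivity
  rw [abs_le]
  constructor <;> nlinarith

theorem abs_slope_sub_limit_le (hh : HasSlopeDistortionOn h x₀ σ r s) (hσ : σ ≤ 2)
    (hx₀b : x₀ < b) (hbs : Ioo x₀ b ⊆ s) (hlim : Tendsto (slope h x₀) (𝓝[<] b) (𝓝 χ))
    (hx : x ∈ s) (hne : x ≠ x₀) : |slope h x₀ x - χ| ≤ (|x - x₀| + (b - x₀)) / r := by
  have hid : Tendsto (fun y ↦ |y - x₀| / r) (𝓝[<] b) (𝓝 (|b - x₀| / r)) :=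
    ((continuous_id.sub continuous_const).abs.div_const r).continuousWithinAt
  have hχσ : |χ - σ| ≤ |b - x₀| / r :=
    le_of_tendsto_of_tendsto (hlim.sub_const σ).abs hid (mem_of_superset (Ioo_mem_nhdsLT hx₀b)
      fun y hy ↦ hh.abs_slope_sub_le hσ (hbs hy) hy.1.ne')
  calc |slope h x₀ x - χ| ≤ |slope h x₀ x - σ| + |χ - σ| := abs_sub_comm σ χ ▸ abs_sub_le _ _ _
    _ ≤ |x - x₀| / r + |b - x₀| / r := add_le_add (hh.abs_slope_sub_le hσ hx hne) hχσ
    _ = (|x - x₀| + (b - x₀)) / r := by rw [abs_of_pos (sub_pos.2 hx₀b), add_div]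

end HasSlopeDistortionOn

section C2

variable {f g h : ℝ → ℝ} {x₀ lam ε K r σ : ℝ} {U V t : Set ℝ}

theorem isAttractingOn_of_abs_deriv_deriv_le (hU : IsOpen U) (hU' : U.OrdConnected)
    (hf : ContDiffOn ℝ 2 f U) (hK : ∀ x ∈ U, |deriv (deriv f) x| ≤ K) (hx₀ : x₀ ∈ U)
    (hfx₀ : f x₀ = x₀) (hlam : deriv f x₀ = lam) (hlam₀ : 0 < lam) (hlam₁ : lam < 1)
    (hε₀ : 0 ≤ ε) (hε₁ : ε < 1) (htU : t ⊆ U)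
    (ht : ∀ x ∈ t, K / 2 * |x - x₀| ≤ ε * (lam * (1 - lam))) :
    IsAttractingOn f x₀ lam (K / 2) ε t where
  map_eq := hfx₀
  abs_slope_sub_le _ hx hne := hlam ▸ abs_slope_sub_deriv_le hU hU' hf hK hx₀ (htU hx) hne
  mul_abs_sub_le := ht
  multiplier_pos := hlam₀
  multiplier_lt_one := hlam₁
  fraction_nonneg := hε₀
  fraction_lt_one := hε₁

theorem hasDerivAt_pos_of_strictMonoOn (hmono : StrictMonoOn h U) (hU : U ∈ 𝓝 x₀)
    (hderiv : HasDerivAt h σ x₀) (hσ : σ ≠ 0) : 0 < σ := by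
  refine hσ.symm.lt_of_le (ge_of_tendsto hderiv.tendsto_slope ?_)
  filter_upwards [mem_nhdsWithin_of_mem_nhds hU] with x hx
  exact hmono.monotoneOn.slope_nonneg (mem_of_mem_nhds hU) hx

theorem ordConnected_inter_preimage (hmono : MonotoneOn h U) (hU : U.OrdConnected)
    (ht : t.OrdConnected) : (U ∩ h ⁻¹' t).OrdConnected := by
  obtain ⟨u, hu, heq⟩ := ht.preimage_monotoneOn hmono
  exact heq ▸ hU.inter hu

theorem hasSlopeDistortionOn_of_conjRelOn (hU : IsOpen U) (hU' : U.OrdConnected) (hV : IsOpen V)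
    (hV' : V.OrdConnected) (hf : ContDiffOn ℝ 2 f U) (hg : ContDiffOn ℝ 2 g V)
    (hKf : ∀ x ∈ U, |deriv (deriv f) x| ≤ K) (hKg : ∀ y ∈ V, |deriv (deriv g) y| ≤ K)
    (hx₀ : x₀ ∈ U) (hfx₀ : f x₀ = x₀) (hgx₀ : g (h x₀) = h x₀) (hlamf : deriv f x₀ = lam)
    (hlamg : deriv g (h x₀) = lam) (hlam₀ : 0 < lam) (hlam₁ : lam < 1) (hK : 0 < K)
    (hr : r = lam * (1 - lam) / (10 * K)) (hUr : ∀ x ∈ U, |x - x₀| ≤ r)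
    (hmono : StrictMonoOn h U) (himage : h '' U = V) (hconj : ConjRelOn h f g U)
    (hderiv : HasDerivAt h σ x₀) (hσ : σ ≠ 0) : HasSlopeDistortionOn h x₀ σ r U := by
  have hscale : lam * (1 - lam) = 10 * K * r := by
    rw [hr]
    field_simp
  have hr₀ : 0 < r := by
    rw [hr]
    have := sub_pos.2 hlam₁
    positivity
  have hK3r {y y₀ : ℝ} (hy : |y - y₀| ≤ 3 * r) :
      K / 2 * |y - y₀| ≤ 3 / 20 * (lam * (1 - lam)) := by
    rw [hscale]
    nlinarith
  have hball : (Metric.closedBall (h x₀) (3 * r)).OrdConnected :=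
    (convex_closedBall _ _).ordConnected
  refine ⟨hr₀, hasDerivAt_pos_of_strictMonoOn hmono (hU.mem_nhds hx₀) hderiv hσ, hmono, hx₀, hUr,
    himage ▸ hV', fun x hx hne hhx ↦ ?_⟩
  have hfattr : IsAttractingOn f x₀ lam (K / 2) (3 / 20)
      (U ∩ h ⁻¹' Metric.closedBall (h x₀) (3 * r)) :=
    isAttractingOn_of_abs_deriv_deriv_le hU hU' hf hKf hx₀ hfx₀ hlamf hlam₀ hlam₁ (by norm_num)
      (by norm_num) inter_subset_left fun y hy ↦ hK3r (by linarith [hUr y hy.1])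
  have hgattr : IsAttractingOn g (h x₀) lam (K / 2) (3 / 20)
      (V ∩ Metric.closedBall (h x₀) (3 * r)) :=
    isAttractingOn_of_abs_deriv_deriv_le hV hV' hg hKg (himage ▸ mem_image_of_mem h hx₀) hgx₀ hlamg
      hlam₀ hlam₁ (by norm_num) (by norm_num) inter_subset_left fun y hy ↦ hK3r hy.2
  have hlog := abs_log_slope_sub_log_deriv_le hfattr hgattr (by positivity)
    (fun y hy ↦ ⟨himage ▸ mem_image_of_mem h hy.1, hy.2⟩) (hmono.mono inter_subset_left)
    (fun y hy hfy ↦ hconj y hy.1 hfy.1) (ordConnected_inter_preimage hmono.monotoneOn hU' hball)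
    ⟨hx₀, Metric.mem_closedBall_self (by positivity)⟩ hderiv hσ ⟨⟨hx, hhx⟩, hne⟩
  refine hlog.trans ?_
  calc K / 2 / ((1 - 3 / 20) ^ 2 * (lam * (1 - lam))) * (|x - x₀| + |h x - h x₀|)
      = 20 / 289 * ((|x - x₀| + |h x - h x₀|) / r) := by
        rw [hscale]
        field_simp
        norm_num
    _ ≤ 7 / 100 * ((|x - x₀| + |h x - h x₀|) / r) :=
        mul_le_mul_of_nonneg_right (by norm_num) (by positivity)

end C2

section Endpoint

variable {h : ℝ → ℝ} {a b c d x₀ : ℝ}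

theorem tendsto_nhdsLT_of_image_Ioo_eq (hab : a < b) (hmono : MonotoneOn h (Ioo a b))
    (himage : h '' Ioo a b = Ioo c d) : Tendsto h (𝓝[<] b) (𝓝 d) := by
  have hcd : c < d := nonempty_Ioo.1 (himage ▸ (nonempty_Ioo.2 hab).image h)
  have hsup := hmono.tendsto_nhdsWithin_Ioo_left (nonempty_Ioo.2 hab) (himage ▸ bddAbove_Ioo)
  rwa [himage, csSup_Ioo hcd] at hsup

theorem tendsto_slope_nhdsLT (hb : b ≠ x₀) (hlim : Tendsto h (𝓝[<] b) (𝓝 d)) :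
    Tendsto (slope h x₀) (𝓝[<] b) (𝓝 ((d - h x₀) / (b - x₀))) := by
  rw [slope_fun_def_field]
  exact (hlim.sub_const _).div ((tendsto_id.mono_left nhdsWithin_le_nhds).sub_const x₀)
    (sub_ne_zero.2 hb)

end Endpoint

theorem IsDiffeoOn.exists_hasDerivAt_ne_zero {h : ℝ → ℝ} {U V : Set ℝ} {x : ℝ}
    (hh : IsDiffeoOn h U V) (hU : IsOpen U) (hV : IsOpen V) (hx : x ∈ U) :
    ∃ σ ≠ 0, HasDerivAt h σ x := by
  obtain ⟨hbij, hC1, hinv, hinvOn, hinvC1⟩ := hh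
  have hderiv : HasDerivAt h (deriv h x) x :=
    ((hC1.differentiableOn one_ne_zero).differentiableAt (hU.mem_nhds hx)).hasDerivAt
  have hinvDeriv : HasDerivAt hinv (deriv hinv (h x)) (h x) :=
    ((hinvC1.differentiableOn one_ne_zero).differentiableAt
      (hV.mem_nhds (hbij.mapsTo hx))).hasDerivAt
  have hid : HasDerivAt (hinv ∘ h) 1 x :=
    (hasDerivAt_id x).congr_of_eventuallyEq (mem_of_superset (hU.mem_nhds hx) hinvOn.1)
  have hmul : deriv hinv (h x) * deriv h x = 1 := (hinvDeriv.comp x hderiv).unique hid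
  exact ⟨deriv h x, right_ne_zero_of_mul_eq_one hmul, hderiv⟩

theorem stmt8_general {a b c d lam xs ys K r chi σ : ℝ} {f g h : ℝ → ℝ}
    (hf : ContDiffOn ℝ 2 f (Ioo a b)) (hxs : xs ∈ Ioo a b) (hfxs : f xs = xs)
    (hlam : deriv f xs = lam) (hlam0 : 0 < lam) (hlam1 : lam < 1)
    (hg : ContDiffOn ℝ 2 g (Ioo c d)) (hgys : g ys = ys) (hglam : deriv g ys = lam)
    (hmono : StrictMonoOn h (Ioo a b)) (himage : h '' Ioo a b = Ioo c d)
    (hderiv : HasDerivAt h σ xs) (hσ : σ ≠ 0)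
    (hconj : ConjRelOn h f g (Ioo a b)) (hhxs : h xs = ys)
    (hK : 0 < K) (hKf : ∀ x ∈ Ioo a b, |deriv (deriv f) x| ≤ K)
    (hKg : ∀ y ∈ Ioo c d, |deriv (deriv g) y| ≤ K)
    (hr : r = lam * (1 - lam) / (10 * K)) (hsmall : max (xs - a) (b - xs) ≤ r)
    (hchi : chi = (d - ys) / (b - xs)) (hchi32 : chi ≤ 3 / 2) :
    ∀ x ∈ Ioo a b, x ≠ xs → |(h x - ys) / (x - xs) - chi| ≤ (|x - xs| + (b - xs)) / r := by
  subst hhxs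
  obtain ⟨hxsa, hxsb⟩ := max_le_iff.1 hsmall
  have hbxs : 0 < b - xs := sub_pos.2 hxs.2
  have hbs : Ioo xs b ⊆ Ioo a b := Ioo_subset_Ioo_left hxs.1.le
  have hdist : HasSlopeDistortionOn h xs σ r (Ioo a b) :=
    hasSlopeDistortionOn_of_conjRelOn isOpen_Ioo ordConnected_Ioo isOpen_Ioo ordConnected_Ioo hf hg
      hKf hKg hxs hfxs hgys hlam hglam hlam0 hlam1 hK hr
      (fun x hx ↦ abs_le.2 ⟨by linarith [hx.1], by linarith [hx.2]⟩) hmono himage hconj hderiv hσ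
  have hlim : Tendsto (slope h xs) (𝓝[<] b) (𝓝 chi) := hchi ▸ tendsto_slope_nhdsLT hxs.2.ne'
    (tendsto_nhdsLT_of_image_Ioo_eq (hxs.1.trans hxs.2) hmono.monotoneOn himage)
  have hbound (x) (hx : x ∈ Ioo xs b) : h x - h xs ≤ 3 / 2 * r := by
    have hhx : h x ∈ Ioo c d := himage ▸ mem_image_of_mem h (hbs hx)
    rw [hchi, div_le_iff₀ hbxs] at hchi32
    linarith [hhx.2]
  have hσ₂ : σ ≤ 2 := hdist.deriv_le_two hxs.2 hbs hbound hlim hchi32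
  intro x hx hne
  simpa only [slope_def_field] using hdist.abs_slope_sub_limit_le hσ₂ hxs.2 hbs hlim hx hne

/-- A bound on the range of the conjugacy function (Lemma 4.6). -/
theorem stmt8 (a b c d lam xs ys K r chi : ℝ) (f g h : ℝ → ℝ)
    (hab : a < b)
    (hf : ContDiffOn ℝ 2 f (Set.Ioo a b))
    (hfd : ∀ x ∈ Set.Ioo a b, 0 < deriv f x)
    (hxs : xs ∈ Set.Ioo a b) (hfxs : f xs = xs)
    (hfuniq : ∀ x ∈ Set.Ioo a b, f x = x → x = xs)
    (hlam : deriv f xs = lam) (hlam0 : 0 < lam) (hlam1 : lam < 1)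
    (hg : ContDiffOn ℝ 2 g (Set.Iio d))
    (hgd : ∀ y < d, 0 < deriv g y)
    (hys : ys < d) (hgys : g ys = ys)
    (hguniq : ∀ y < d, g y = y → y = ys)
    (hglam : deriv g ys = lam)
    (hgbot : Filter.Tendsto g Filter.atBot Filter.atBot)
    (hc : c < ys)
    (hmono : StrictMonoOn h (Set.Ioo a b))
    (hdiffeo : IsDiffeoOn h (Set.Ioo a b) (Set.Ioo c d))
    (hconj : ConjRelOn h f g (Set.Ioo a b))
    (hhxs : h xs = ys)
    (hK : 0 < K)
    (hKf : ∀ x ∈ Set.Ioo a b, |deriv (deriv f) x| ≤ K)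
    (hKg : ∀ y ∈ Set.Ioo c d, |deriv (deriv g) y| ≤ K)
    (hr : r = lam * (1 - lam) / (10 * K))
    (hsmall : max (xs - a) (b - xs) ≤ r)
    (hchi : chi = (d - ys) / (b - xs)) (hchi32 : chi ≤ 3 / 2) :
    ∀ x ∈ Set.Ioo a b, x ≠ xs →
      |(h x - ys) / (x - xs) - chi| < 3 / (2 * r) * (4 * |x - xs| + b - xs) := by
  intro x hx hne
  obtain ⟨σ, hσ, hderiv⟩ := hdiffeo.exists_hasDerivAt_ne_zero isOpen_Ioo isOpen_Ioo hxs
  have hr₀ : 0 < r := lt_of_lt_of_le (lt_max_of_lt_right (sub_pos.2 hxs.2)) hsmall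
  calc |(h x - ys) / (x - xs) - chi| ≤ (|x - xs| + (b - xs)) / r :=
        stmt8_general hf hxs hfxs hlam hlam0 hlam1 (hg.mono Ioo_subset_Iio_self) hgys hglam hmono
          hdiffeo.1.image_eq hderiv hσ hconj hhxs hK hKf hKg hr hsmall hchi hchi32 x hx hne
    _ < 3 / (2 * r) * (4 * |x - xs| + b - xs) := by
        rw [div_mul_eq_mul_div, div_lt_div_iff₀ hr₀ (by positivity)]
        nlinarith [abs_pos.2 (sub_ne_zero.2 hne), hxs.2]
end

section
/- Let (a,b) be an open interval containing 0 and let f : (a,b) → ℝ be C² with f′(x) > 0 for all x ∈ (a,b). Suppose 0 is the unique fixed point of f in (a,b) with f′(0) = λ ∈ (0,1). Let K > 0 satisfy |f″(x)| ≤ K for all x ∈ (a,b), set r = λ(1−λ)/(10K), and suppose max(|a|, b) ≤ r. Then: (a) for every u ∈ (a,b) and every integer n ≥ 0 such that the iterates u, f(u), …, fⁿ(u) all lie in (a,b), one has |fⁿ(u) − λⁿu| ≤ ((1 − λⁿ)λⁿ/(5r))·u²; and (b) for every v ∈ (a,b), every integer n ≥ 0, and every w ∈ (a,b) with fⁿ(w)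 = v (all intermediate iterates lying in (a,b)), one has |w − v/λⁿ| ≤ (2(1 − λⁿ)/(5λ²ⁿr))·v². -/
/-!
By Taylor's formula `f x = lam * x + O(x ^ 2)`, so `f^[n] u - lam ^ n * u` satisfies a recursion
whose linear part contracts by `lam` and whose inhomogeneity at step `n` is of order
`lam ^ (2 * n) * u ^ 2`, because `f^[n] u` is itself comparable to `lam ^ n * u`. Summing the
geometric series gives a bound proportional to `(1 - lam ^ n) * lam ^ n * u ^ 2`. The smallness of
`u` makes this error at most a fixed fraction of `lam ^ n * |u|`; hence `|u|` is also controlled by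
`|f^[n] u| / lam ^ n`, which turns the forward estimate into the backward one.
-/

theorem abs_sub_sub_deriv_mul_le_of_abs_deriv_deriv_le {s : Set ℝ} {f : ℝ → ℝ} {K x₀ x : ℝ}
    (hs : IsOpen s) (hsc : s.OrdConnected) (hf : ContDiffOn ℝ 2 f s)
    (hK : ∀ y ∈ s, |deriv (deriv f) y| ≤ K) (hx₀ : x₀ ∈ s) (hx : x ∈ s) :
    |f x - f x₀ - deriv f x₀ * (x - x₀)| ≤ K / 2 * (x - x₀) ^ 2 := by
  rcases eq_or_ne x₀ x with rfl | hne
  · simp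
  have hsub : Set.uIcc x₀ x ⊆ s := hsc.uIcc_subset hx₀ hx
  have hderiv : derivWithin f (Set.uIcc x₀ x) x₀ = deriv f x₀ :=
    ((hf.differentiableOn two_ne_zero).differentiableAt (hs.mem_nhds hx₀)).derivWithin
      (uniqueDiffOn_uIcc hne x₀ Set.left_mem_uIcc)
  obtain ⟨ξ, hξ, hTaylor⟩ := taylor_mean_remainder_lagrange_iteratedDeriv (n := 1) hne
    (by simpa only [Nat.cast_one, one_add_one_eq_two] using hf.mono hsub)
  have hremainder :
      f x - f x₀ - deriv f x₀ * (x - x₀) = deriv (deriv f) ξ / 2 * (x - x₀) ^ 2 := by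
    simp only [taylorWithinEval_succ, taylor_within_zero_eval, CharP.cast_eq_zero, zero_add,
      Nat.factorial_zero, Nat.cast_one, mul_one, inv_one, pow_one, one_mul,
      iteratedDerivWithin_one, hderiv, smul_eq_mul, Nat.reduceAdd, iteratedDeriv_succ,
      iteratedDeriv_zero, Nat.factorial_two, Nat.cast_ofNat] at hTaylor
    linarith
  rw [hremainder, abs_mul, abs_div, abs_two, abs_sq]
  gcongr
  exact hK ξ (hsub (Set.Ioo_subset_Icc_self hξ))

theorem Ioo_subset_closedBall_zero {a b r : ℝ} (hab : max |a| b ≤ r) :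
    Set.Ioo a b ⊆ Metric.closedBall 0 r := by
  obtain ⟨ha, hb⟩ := max_le_iff.1 hab
  rw [Real.closedBall_eq_Icc, zero_sub, zero_add]
  exact Set.Ioo_subset_Icc_self.trans (Set.Icc_subset_Icc (neg_le_of_abs_le ha) hb)

section Iterate

theorem one_sub_mul_mul_mul_sq_le {p c t ε : ℝ} (hp : 0 ≤ p) (hc : 0 ≤ c) (ht : 0 ≤ t)
    (hct : c * t ≤ ε) : (1 - p) * p * c * t ^ 2 ≤ ε * (p * t) :=
  calc (1 - p) * p * c * t ^ 2 = (1 - p) * (c * t) * (p * t) := by ring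
    _ ≤ 1 * (c * t) * (p * t) := by
        gcongr
        linarith
    _ ≤ ε * (p * t) := by
        rw [one_mul]
        gcongr

variable {E : Type*} [NormedAddCommGroup E] [NormedSpace ℝ E] {s : Set E} {f : E → E}
  {lam c : ℝ} {u : E} {n : ℕ}

-- The constant `2 / 5` matters only through `(1 + 2 / 5) ^ 2 ≤ 2`, which absorbs the factor `1 / 2`
-- in the quadratic bound on `f`.
theorem norm_iterate_sub_pow_smul_le (hlam0 : 0 ≤ lam) (hlam1 : lam ≤ 1) (hc : 0 ≤ c)
    (hf : ∀ x ∈ s, ‖f x - lam • x‖ ≤ lam * (1 - lam) * c / 2 * ‖x‖ ^ 2)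
    (hu : c * ‖u‖ ≤ 2 / 5) (hmem : ∀ k < n, f^[k] u ∈ s) :
    ‖f^[n] u - lam ^ n • u‖ ≤ (1 - lam ^ n) * lam ^ n * c * ‖u‖ ^ 2 := by
  induction n with
  | zero => simp
  | succ n ih =>
    have hprev := ih fun k hk ↦ hmem k (hk.trans n.lt_succ_self)
    have hstep := hf _ (hmem n n.lt_succ_self)
    have hlin : ‖lam ^ n • u‖ = lam ^ n * ‖u‖ := norm_smul_of_nonneg (by positivity) u
    have hnorm : ‖f^[n] u‖ ≤ 7 / 5 * (lam ^ n * ‖u‖) := by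
      have htri := norm_le_norm_sub_add (f^[n] u) (lam ^ n • u)
      have hsmall := one_sub_mul_mul_mul_sq_le (pow_nonneg hlam0 n) hc (norm_nonneg u) hu
      linarith
    have hsq : ‖f^[n] u‖ ^ 2 ≤ 2 * (lam ^ n * ‖u‖) ^ 2 := by
      have := pow_le_pow_left₀ (norm_nonneg _) hnorm 2
      nlinarith [sq_nonneg (lam ^ n * ‖u‖)]
    have hcoef : 0 ≤ lam * (1 - lam) * c / 2 := by
      have := sub_nonneg.2 hlam1
      positivity
    calc ‖f^[n + 1] u - lam ^ (n + 1) • u‖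
        = ‖(f (f^[n] u) - lam • f^[n] u) + lam • (f^[n] u - lam ^ n • u)‖ := by
          rw [Function.iterate_succ_apply', smul_sub, smul_smul, ← pow_succ', sub_add_sub_cancel]
      _ ≤ ‖f (f^[n] u) - lam • f^[n] u‖ + lam * ‖f^[n] u - lam ^ n • u‖ := by
          rw [← norm_smul_of_nonneg hlam0]
          exact norm_add_le _ _
      _ ≤ lam * (1 - lam) * c / 2 * (2 * (lam ^ n * ‖u‖) ^ 2) +
            lam * ((1 - lam ^ n) * lam ^ n * c * ‖u‖ ^ 2) := by
          gcongr
          exact hstep.trans (mul_le_mul_of_nonneg_left hsq hcoef)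
      _ = (1 - lam ^ (n + 1)) * lam ^ (n + 1) * c * ‖u‖ ^ 2 := by ring

-- Here `1 / 4` enters through `2 * (1 - 1 / 4) ^ 2 ≥ 1`.
theorem norm_sub_inv_pow_smul_iterate_le (hlam0 : 0 < lam) (hlam1 : lam ≤ 1) (hc : 0 ≤ c)
    (hf : ∀ x ∈ s, ‖f x - lam • x‖ ≤ lam * (1 - lam) * c / 2 * ‖x‖ ^ 2)
    (hu : c * ‖u‖ ≤ 1 / 4) (hmem : ∀ k < n, f^[k] u ∈ s) :
    ‖u - (lam ^ n)⁻¹ • f^[n] u‖ ≤ 2 * (1 - lam ^ n) * c / lam ^ (2 * n) * ‖f^[n] u‖ ^ 2 := by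
  have hpow : 0 < lam ^ n := pow_pos hlam0 n
  have hpow1 : 0 ≤ 1 - lam ^ n := sub_nonneg.2 (pow_le_one₀ hlam0.le hlam1)
  have hfwd := norm_iterate_sub_pow_smul_le hlam0.le hlam1 hc hf (hu.trans (by norm_num)) hmem
  have hnorm : 3 / 4 * (lam ^ n * ‖u‖) ≤ ‖f^[n] u‖ := by
    have htri := norm_le_norm_add_norm_sub (f^[n] u) (lam ^ n • u)
    have hsmall := one_sub_mul_mul_mul_sq_le hpow.le hc (norm_nonneg u) hu
    rw [norm_smul_of_nonneg hpow.le] at htri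
    linarith
  have hsq : (lam ^ n * ‖u‖) ^ 2 ≤ 2 * ‖f^[n] u‖ ^ 2 := by
    have := pow_le_pow_left₀ (by positivity) hnorm 2
    nlinarith [sq_nonneg (lam ^ n * ‖u‖)]
  calc ‖u - (lam ^ n)⁻¹ • f^[n] u‖
      = (lam ^ n)⁻¹ * ‖f^[n] u - lam ^ n • u‖ := by
        rw [← norm_smul_of_nonneg (inv_nonneg.2 hpow.le), smul_sub, inv_smul_smul₀ hpow.ne',
          norm_sub_rev]
    _ ≤ (lam ^ n)⁻¹ * ((1 - lam ^ n) * lam ^ n * c * ‖u‖ ^ 2) := by gcongr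
    _ = (1 - lam ^ n) * c / lam ^ (2 * n) * (lam ^ n * ‖u‖) ^ 2 := by
        rw [mul_comm 2 n, pow_mul]
        field_simp
    _ ≤ (1 - lam ^ n) * c / lam ^ (2 * n) * (2 * ‖f^[n] u‖ ^ 2) := by gcongr
    _ = 2 * (1 - lam ^ n) * c / lam ^ (2 * n) * ‖f^[n] u‖ ^ 2 := by ring

theorem stmt19_general {K r : ℝ} (hlam0 : 0 < lam) (hlam1 : lam < 1) (hK : 0 < K)
    (hf : ∀ x ∈ s, ‖f x - lam • x‖ ≤ K * ‖x‖ ^ 2)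
    (hr : r = lam * (1 - lam) / (10 * K)) (hs : s ⊆ Metric.closedBall 0 r) :
    (∀ u ∈ s, ∀ n : ℕ, (∀ k < n, f^[k] u ∈ s) →
      ‖f^[n] u - lam ^ n • u‖ ≤ (1 - lam ^ n) * lam ^ n / (5 * r) * ‖u‖ ^ 2) ∧
    (∀ w ∈ s, ∀ n : ℕ, (∀ k < n, f^[k] w ∈ s) →
      ‖w - (lam ^ n)⁻¹ • f^[n] w‖ ≤
        2 * (1 - lam ^ n) / (5 * lam ^ (2 * n) * r) * ‖f^[n] w‖ ^ 2) := by
  have hlam : 0 < 1 - lam := sub_pos.2 hlam1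
  have hr0 : 0 < r := hr ▸ by positivity
  have hc : 0 ≤ 1 / (5 * r) := by positivity
  have hKc : K = lam * (1 - lam) * (1 / (5 * r)) / 2 := by
    rw [hr]
    field_simp
    norm_num
  have hsmall : ∀ u ∈ s, 1 / (5 * r) * ‖u‖ ≤ 1 / 5 := fun u hu ↦
    calc 1 / (5 * r) * ‖u‖ ≤ 1 / (5 * r) * r := by
          gcongr
          exact mem_closedBall_zero_iff.1 (hs hu)
      _ = 1 / 5 := by field_simp
  rw [hKc] at hf
  refine ⟨fun u hu n hmem ↦ ?_, fun w hw n hmem ↦ ?_⟩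
  · convert norm_iterate_sub_pow_smul_le hlam0.le hlam1.le hc hf
      ((hsmall u hu).trans (by norm_num)) hmem using 2
    ring
  · convert norm_sub_inv_pow_smul_iterate_le hlam0 hlam1.le hc hf
      ((hsmall w hw).trans (by norm_num)) hmem using 2
    field_simp

end Iterate

/-- Lemma A.1: iterate bounds near a stable fixed point. -/
theorem stmt19 (a b lam K r : ℝ) (f : ℝ → ℝ)
    (ha : a < 0) (hb : 0 < b)
    (hf : ContDiffOn ℝ 2 f (Set.Ioo a b))
    (hfd : ∀ x ∈ Set.Ioo a b, 0 < deriv f x)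
    (hfix : f 0 = 0)
    (huniq : ∀ x ∈ Set.Ioo a b, f x = x → x = 0)
    (hlam : deriv f 0 = lam) (hlam0 : 0 < lam) (hlam1 : lam < 1)
    (hK : 0 < K) (hKf : ∀ x ∈ Set.Ioo a b, |deriv (deriv f) x| ≤ K)
    (hr : r = lam * (1 - lam) / (10 * K))
    (hab : max |a| b ≤ r) :
    (∀ u ∈ Set.Ioo a b, ∀ n : ℕ, (∀ k ≤ n, f^[k] u ∈ Set.Ioo a b) →
      |f^[n] u - lam ^ n * u| ≤ (1 - lam ^ n) * lam ^ n / (5 * r) * u ^ 2) ∧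
    (∀ v ∈ Set.Ioo a b, ∀ n : ℕ, ∀ w ∈ Set.Ioo a b, f^[n] w = v →
      (∀ k ≤ n, f^[k] w ∈ Set.Ioo a b) →
      |w - v / lam ^ n| ≤ 2 * (1 - lam ^ n) / (5 * lam ^ (2 * n) * r) * v ^ 2) := by
  have hquad : ∀ x ∈ Set.Ioo a b, |f x - lam * x| ≤ K * |x| ^ 2 := fun x hx ↦ by
    have hTaylor := abs_sub_sub_deriv_mul_le_of_abs_deriv_deriv_le isOpen_Ioo Set.ordConnected_Ioo
      hf hKf ⟨ha, hb⟩ hx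
    rw [hfix, hlam, sub_zero, sub_zero, ← sq_abs] at hTaylor
    exact hTaylor.trans (by gcongr; exact half_le_self hK.le)
  obtain ⟨hforward, hbackward⟩ :=
    stmt19_general hlam0 hlam1 hK hquad hr (Ioo_subset_closedBall_zero hab)
  refine ⟨fun u hu n hmem ↦ ?_, ?_⟩
  · simpa using hforward u hu n fun k hk ↦ hmem k hk.le
  · rintro _ - n w hw rfl hmem
    simpa [div_eq_inv_mul] using hbackward w hw n fun k hk ↦ hmem k hk.le
end
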